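/- Let φ(x,y) = a₁x² + a₂xy + a₃y² be a non-degenerate rational quadratic form (a₁,a₂,a₃ ∈ ℚ, a₂² − 4a₁a₃ ≠ 0), let 0 < s < 1 and C ≥ 1. There exist constants ε = ε(φ, s) > 0, K = K(φ, s) > 0 and an exponent e = e(s) > 0 such that the following holds for all δ > 0. Let A ⊂ [0,1] be any δ-separated set of cardinality ⌈δ^{-s}⌉ such that #(A ∩ I) ≤ C·l^s·(#A) for every interval I of length l ≥ δ. Then for every subset B ⊆ A with #B ≥ δ^{ε}(#A), one has E_δ(B + B) + E_δ(φ(B,B)) ≥ K·C^{-e}·δ^{-ε}·(#A). -/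

import Mathlib

open MeasureTheory Real
open scoped Classical

/-- `E_δ(A)`: the δ-covering number of `A ⊆ ℝ`, the minimal number of sets of
diameter at most `δ` needed to cover `A`. -/
noncomputable def coverNum (δ : ℝ) (A : Set ℝ) : ℕ :=
  sInf {m : ℕ | ∃ F : Finset (Set ℝ), F.card = m ∧
    (∀ U ∈ F, EMetric.diam U ≤ ENNReal.ofReal δ) ∧ A ⊆ ⋃ U ∈ F, U}

section
open scoped Pointwise

namespace DSP

/-- integers with bounded pairwise distance -/
lemma int_diam_card (S : Finset ℤ) (R : ℝ) (hR : 0 ≤ R)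
    (h : ∀ x ∈ S, ∀ y ∈ S, |(x:ℝ) - y| ≤ R) : (S.card : ℝ) ≤ 2 * R + 1 := by
  rcases S.eq_empty_or_nonempty with rfl | ⟨x, hx⟩
  · simp; positivity
  · have hsub : S ⊆ Finset.Icc (x - ⌊R⌋) (x + ⌊R⌋) := by
      intro y hy
      have h1 := abs_le.1 (h x hx y hy)
      rw [Finset.mem_Icc]
      have e1 : x - y ≤ ⌊R⌋ := by
        rw [Int.le_floor]; push_cast; linarith
      have e2 : y - x ≤ ⌊R⌋ := by
        rw [Int.le_floor]; push_cast; linarith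
      omega
    have h2 := Finset.card_le_card hsub
    rw [Int.card_Icc] at h2
    have h3 : (0:ℤ) ≤ ⌊R⌋ := Int.floor_nonneg.2 hR
    have h4 : (S.card : ℤ) ≤ 2 * ⌊R⌋ + 1 := by omega
    have h5 : (S.card : ℝ) ≤ 2 * (⌊R⌋:ℝ) + 1 := by exact_mod_cast h4
    have := Int.floor_le R
    linarith

/-- bounding by fibres -/
lemma card_le_fib {ι κ : Type*} [DecidableEq κ] (I : Finset ι) (f : ι → κ) (B : ℝ)
    (h : ∀ c, ((I.filter (fun i => f i = c)).card : ℝ) ≤ B) :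
    (I.card : ℝ) ≤ B * ((I.image f).card : ℝ) := by
  rw [Finset.card_eq_sum_card_image f I]
  push_cast
  calc _ ≤ ∑ b ∈ I.image f, B := Finset.sum_le_sum (fun c _ => h c)
    _ = _ := by rw [Finset.sum_const, nsmul_eq_mul, mul_comm]

/-- same colour implies close values: number of values bounded -/
lemma image_card_le {ι κ : Type*} [DecidableEq κ] (I : Finset ι) (f : ι → κ) (g : ι → ℤ) (R : ℝ) (hR : 0 ≤ R)
    (h : ∀ i ∈ I, ∀ j ∈ I, f i = f j → |(g i : ℝ) - g j| ≤ R) :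
    ((I.image g).card : ℝ) ≤ (2 * R + 1) * ((I.image f).card : ℝ) := by
  have h1 : I.image g ⊆ (I.image f).biUnion (fun c => (I.filter (fun i => f i = c)).image g) := by
    intro y hy
    obtain ⟨i, hi, rfl⟩ := Finset.mem_image.1 hy
    refine Finset.mem_biUnion.2 ⟨f i, Finset.mem_image_of_mem _ hi, ?_⟩
    exact Finset.mem_image_of_mem _ (by simp [hi])
  have h2 : ((I.image g).card : ℝ) ≤
      ∑ c ∈ I.image f, (((I.filter (fun i => f i = c)).image g).card : ℝ) := by
    exact_mod_cast (Finset.card_le_card h1).trans Finset.card_biUnion_le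
  refine h2.trans ?_
  calc _ ≤ ∑ c ∈ I.image f, (2 * R + 1) := by
        refine Finset.sum_le_sum (fun c _ => int_diam_card _ R hR ?_)
        intro x hx y hy
        obtain ⟨i, hi, rfl⟩ := Finset.mem_image.1 hx
        obtain ⟨j, hj, rfl⟩ := Finset.mem_image.1 hy
        rw [Finset.mem_filter] at hi hj
        exact h i hi.1 j hj.1 (hi.2.trans hj.2.symm)
    _ = _ := by rw [Finset.sum_const, nsmul_eq_mul, mul_comm]

/-- Cauchy-Schwarz: number of pairs with the same colour -/
lemma energy_lower {ι κ : Type*} [DecidableEq κ] (I : Finset ι) (f : ι → κ) :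
    (I.card : ℝ) ^ 2 ≤ ((I.image f).card : ℝ) *
      (((I ×ˢ I).filter (fun p => f p.1 = f p.2)).card : ℝ) := by
  have h1 : ((I ×ˢ I).filter (fun p => f p.1 = f p.2)).card =
      ∑ c ∈ I.image f, (I.filter (fun i => f i = c)).card ^ 2 := by
    rw [Finset.card_eq_sum_card_fiberwise (f := fun p => f p.1) (t := I.image f)]
    · refine Finset.sum_congr rfl (fun c _ => ?_)
      rw [sq, ← Finset.card_product]
      congr 1
      ext ⟨a, b⟩
      simp only [Finset.mem_filter, Finset.mem_product]
      constructor
      · rintro ⟨⟨⟨ha, hb⟩, hab⟩, hc⟩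
        exact ⟨⟨ha, hc⟩, hb, by rw [← hab]; exact hc⟩
      · rintro ⟨⟨ha, hc⟩, hb, hc'⟩
        exact ⟨⟨⟨ha, hb⟩, hc.trans hc'.symm⟩, hc⟩
    · intro p hp
      simp only [Finset.coe_filter, Set.mem_ofPred_eq, Finset.mem_product] at hp
      exact Finset.mem_coe.2 (Finset.mem_image_of_mem _ hp.1.1)
  rw [h1, Finset.card_eq_sum_card_image f I]
  push_cast
  exact sq_sum_le_card_mul_sum_sq

/-- the discretised dilate -/
noncomputable def F (A : Finset ℤ) (c : ℝ) : Finset ℤ := A.image (fun a : ℤ => ⌊c * (a:ℝ)⌋)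

def Good (A : Finset ℤ) (K : ℝ) (j : ℕ) (c : ℝ) : Prop :=
  ((A + F A c).card : ℝ) ≤ K ^ j * (A.card : ℝ)

lemma Good.mono {A : Finset ℤ} {K : ℝ} (hK : 1 ≤ K) {i j : ℕ} (hij : i ≤ j) {c : ℝ}
    (h : Good A K i c) : Good A K j c := by
  refine le_trans h ?_
  gcongr

/-- iterated sumset bound -/
lemma sums_bound (A : Finset ℤ) (hA : A.Nonempty) (K : ℝ)
    (h : ((A + A).card : ℝ) ≤ K * A.card) (m n : ℕ) :
    ((m • A - n • A).card : ℝ) ≤ K ^ (m + n) * A.card := by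
  have h1 := Finset.pluennecke_ruzsa_inequality_nsmul_sub_nsmul_add hA A m n
  have hpos : (0:ℝ) < A.card := by exact_mod_cast hA.card_pos
  have h2 : ((m • A - n • A).card : ℝ) ≤
      (((A + A).card : ℝ) / (A.card : ℝ)) ^ (m + n) * A.card := by
    have := (NNRat.cast_le (K := ℝ)).2 h1
    push_cast at this
    exact this
  refine h2.trans ?_
  gcongr
  rw [div_le_iff₀ hpos]
  exact h

lemma card_sub_AA (A : Finset ℤ) (hA : A.Nonempty) (K : ℝ)
    (h : ((A + A).card : ℝ) ≤ K * A.card) : ((A - A).card : ℝ) ≤ K ^ 2 * A.card := by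
  have := sums_bound A hA K h 1 1
  simpa using this

lemma card_32 (A : Finset ℤ) (hA : A.Nonempty) (K : ℝ)
    (h : ((A + A).card : ℝ) ≤ K * A.card) :
    ((A + (A - A) + (A - A)).card : ℝ) ≤ K ^ 5 * A.card := by
  have := sums_bound A hA K h 3 2
  have e : (3 • A - 2 • A) = A + (A - A) + (A - A) := by
    rw [succ_nsmul A 2, two_nsmul]
    simp only [sub_eq_add_neg, neg_add]
    ac_rfl
  rw [e] at this
  simpa using this

lemma card_21 (A : Finset ℤ) (hA : A.Nonempty) (K : ℝ)
    (h : ((A + A).card : ℝ) ≤ K * A.card) :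
    ((A + (A - A)).card : ℝ) ≤ K ^ 3 * A.card := by
  have := sums_bound A hA K h 2 1
  have e : (2 • A - 1 • A) = A + (A - A) := by
    rw [one_nsmul, two_nsmul]
    simp only [sub_eq_add_neg]
    ac_rfl
  rw [e] at this
  simpa using this

lemma card_add_le_real (X Y : Finset ℤ) : ((X + Y).card : ℝ) ≤ X.card * Y.card := by
  exact_mod_cast Finset.card_add_le

lemma Good.cover {A : Finset ℤ} (hA : A.Nonempty) {K : ℝ} {j : ℕ} {c : ℝ}
    (h : Good A K j c) : ∃ X : Finset ℤ, (X.card : ℝ) ≤ K ^ j ∧ F A c ⊆ X + (A - A) := by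
  unfold Good at h
  rw [add_comm] at h
  obtain ⟨X, -, h1, h2⟩ := Finset.ruzsa_covering_add (K := K ^ j) hA h
  exact ⟨X, h1, h2⟩

/-- two dilates at once -/
lemma good_two {A : Finset ℤ} (hA : A.Nonempty) {K : ℝ} (hK : 1 ≤ K)
    (hAA : ((A + A).card : ℝ) ≤ K * A.card) {i j : ℕ} {c d : ℝ}
    (hc : Good A K i c) (hd : Good A K j d) :
    ((A + F A c + F A d).card : ℝ) ≤ K ^ (i + j + 5) * A.card := by
  obtain ⟨X, hX, hX'⟩ := hc.cover hA
  obtain ⟨Y, hY, hY'⟩ := hd.cover hA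
  have hsub : A + F A c + F A d ⊆ (X + Y) + (A + (A - A) + (A - A)) := by
    refine (Finset.add_subset_add (Finset.add_subset_add_left hX') hY').trans ?_
    apply subset_of_eq
    ac_rfl
  have h1 : ((A + F A c + F A d).card : ℝ) ≤ ((X + Y) + (A + (A - A) + (A - A))).card := by
    exact_mod_cast Finset.card_le_card hsub
  refine h1.trans ((card_add_le_real _ _).trans ?_)
  have h2 := card_add_le_real X Y
  have h3 := card_32 A hA K hAA
  have hK0 : 0 ≤ K := by linarith
  calc ((X + Y).card : ℝ) * ((A + (A - A) + (A - A)).card : ℝ)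
      ≤ (K ^ i * K ^ j) * (K ^ 5 * A.card) := by
        gcongr
        exact h2.trans (by gcongr)
    _ = _ := by ring

end DSP
end

section
open scoped Pointwise

namespace DSP

lemma good_of_cover {A : Finset ℤ} {K : ℝ} (hK : 1 ≤ K) {e : ℝ} (Z W : Finset ℤ) {z w : ℕ}
    (hF : F A e ⊆ Z + W) (hZ : (Z.card : ℝ) ≤ K ^ z)
    (hW : ((A + W).card : ℝ) ≤ K ^ w * A.card) : Good A K (z + w) e := by
  have hsub : A + F A e ⊆ Z + (A + W) := by
    refine (Finset.add_subset_add_left hF).trans ?_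
    apply subset_of_eq
    ac_rfl
  have h1 : ((A + F A e).card : ℝ) ≤ (Z + (A + W)).card := by
    exact_mod_cast Finset.card_le_card hsub
  refine h1.trans ((card_add_le_real _ _).trans ?_)
  have hK0 : 0 ≤ K := by linarith
  calc (Z.card : ℝ) * ((A + W).card : ℝ) ≤ K ^ z * (K ^ w * A.card) := by gcongr
    _ = _ := by ring

lemma mem_F {A : Finset ℤ} {c : ℝ} {a : ℤ} (ha : a ∈ A) : ⌊c * (a:ℝ)⌋ ∈ F A c :=
  Finset.mem_image_of_mem _ ha

variable {A : Finset ℤ} {K : ℝ}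

lemma Good.add (hA : A.Nonempty) (hK : 100 ≤ K)
    (hAA : ((A + A).card : ℝ) ≤ K * A.card) {i j : ℕ} {c d : ℝ}
    (hc : Good A K i c) (hd : Good A K j d) : Good A K (i + j + 6) (c + d) := by
  obtain ⟨X, hX, hX'⟩ := hc.cover hA
  obtain ⟨Y, hY, hY'⟩ := hd.cover hA
  have hK1 : 1 ≤ K := by linarith
  have hK0 : 0 ≤ K := by linarith
  have := good_of_cover (A := A) (z := i + j + 1) (w := 5) (e := c + d) hK1
    (X + Y + Finset.Icc 0 1) ((A - A) + (A - A)) ?_ ?_ ?_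
  · exact this
  · intro v hv
    obtain ⟨a, ha, rfl⟩ := Finset.mem_image.1 hv
    obtain ⟨x, hx, u, hu, h1⟩ := Finset.mem_add.1 (hX' (mem_F ha))
    obtain ⟨y, hy, u', hu', h2⟩ := Finset.mem_add.1 (hY' (mem_F ha))
    refine Finset.mem_add.2 ⟨x + y + (⌊(c + d) * (a:ℝ)⌋ - ⌊c * (a:ℝ)⌋ - ⌊d * (a:ℝ)⌋),
      Finset.add_mem_add (Finset.add_mem_add hx hy) ?_, u + u', Finset.add_mem_add hu hu', ?_⟩
    · rw [Finset.mem_Icc, add_mul]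
      have h3 := Int.le_floor_add (c * (a:ℝ)) (d * (a:ℝ))
      have h4 := Int.le_floor_add_floor (c * (a:ℝ)) (d * (a:ℝ))
      omega
    · omega
  · refine (card_add_le_real _ _).trans ?_
    have h5 := card_add_le_real X Y
    have h6 : ((Finset.Icc (0:ℤ) 1).card : ℝ) = 2 := by simp
    rw [h6, pow_succ, pow_add]
    have h7 : (X.card : ℝ) * Y.card ≤ K ^ i * K ^ j := by gcongr
    calc ((X + Y).card : ℝ) * 2 ≤ (K ^ i * K ^ j) * K := by
          gcongr
          · exact h5.trans h7
          · linarith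
      _ = _ := by ring
  · rw [← add_assoc]
    exact card_32 A hA K hAA

lemma Good.neg (hA : A.Nonempty) (hK : 100 ≤ K)
    (hAA : ((A + A).card : ℝ) ≤ K * A.card) {i : ℕ} {c : ℝ}
    (hc : Good A K i c) : Good A K (i + 4) (-c) := by
  obtain ⟨X, hX, hX'⟩ := hc.cover hA
  have hK1 : 1 ≤ K := by linarith
  have hK0 : 0 ≤ K := by linarith
  have := good_of_cover (A := A) (z := i + 1) (w := 3) (e := -c) hK1
    (-X + Finset.Icc (-1) 0) (A - A) ?_ ?_ ?_
  · exact this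
  · intro v hv
    obtain ⟨a, ha, rfl⟩ := Finset.mem_image.1 hv
    obtain ⟨x, hx, u, hu, h1⟩ := Finset.mem_add.1 (hX' (mem_F ha))
    refine Finset.mem_add.2 ⟨-x + (⌊(-c) * (a:ℝ)⌋ + ⌊c * (a:ℝ)⌋),
      Finset.add_mem_add (Finset.neg_mem_neg hx) ?_, -u, ?_, ?_⟩
    · rw [Finset.mem_Icc, neg_mul, Int.floor_neg]
      have h3 := Int.ceil_le_floor_add_one (c * (a:ℝ))
      have h4 := Int.floor_le_ceil (c * (a:ℝ))
      omega
    · obtain ⟨p, hp, q, hq, rfl⟩ := Finset.mem_sub.1 hu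
      exact Finset.mem_sub.2 ⟨q, hq, p, hp, by ring⟩
    · omega
  · refine (card_add_le_real _ _).trans ?_
    have h6 : ((Finset.Icc (-1:ℤ) 0).card : ℝ) = 2 := by simp
    rw [h6, pow_succ, Finset.card_neg]
    gcongr
    linarith
  · exact card_21 A hA K hAA

lemma Good.sub (hA : A.Nonempty) (hK : 100 ≤ K)
    (hAA : ((A + A).card : ℝ) ≤ K * A.card) {i j : ℕ} {c d : ℝ}
    (hc : Good A K i c) (hd : Good A K j d) : Good A K (i + j + 10) (c - d) := by
  rw [sub_eq_add_neg]
  have := hc.add hA hK hAA (hd.neg hA hK hAA)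
  exact this.mono (by linarith) (by omega)

lemma Good.mul (hA : A.Nonempty) (hK : 100 ≤ K)
    (hAA : ((A + A).card : ℝ) ≤ K * A.card) {i j b : ℕ} {c d : ℝ} (hb : |c| ≤ K ^ b)
    (hc : Good A K i c) (hd : Good A K j d) : Good A K (2 * i + j + b + 6) (c * d) := by
  obtain ⟨X, hX, hX'⟩ := hc.cover hA
  obtain ⟨Y, hY, hY'⟩ := hd.cover hA
  have hK1 : 1 ≤ K := by linarith
  have hK0 : 0 ≤ K := by linarith
  set E : ℤ := ⌈|c|⌉ + 2 with hE
  have := good_of_cover (A := A) (z := j + i + i + (b + 1)) (w := 5) (e := c * d) hK1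
    (Y.image (fun y : ℤ => ⌊c * (y:ℝ)⌋) + (X - X) + Finset.Icc (-E) E)
      ((A - A) + (A - A)) ?_ ?_ ?_
  · exact this.mono hK1 (by omega)
  · intro v hv
    obtain ⟨a, ha, rfl⟩ := Finset.mem_image.1 hv
    obtain ⟨y, hy, u, hu, h1⟩ := Finset.mem_add.1 (hY' (mem_F ha))
    obtain ⟨p, hp, q, hq, rfl⟩ := Finset.mem_sub.1 hu
    obtain ⟨x1, hx1, w1, hw1, e1⟩ := Finset.mem_add.1 (hX' (mem_F hp))
    obtain ⟨x2, hx2, w2, hw2, e2⟩ := Finset.mem_add.1 (hX' (mem_F hq))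
    obtain ⟨p1, hp1, p2, hp2, rfl⟩ := Finset.mem_sub.1 hw1
    obtain ⟨q1, hq1, q2, hq2, rfl⟩ := Finset.mem_sub.1 hw2
    refine Finset.mem_add.2 ⟨⌊c * (y:ℝ)⌋ + (x1 - x2) +
      (⌊c * d * (a:ℝ)⌋ - ⌊c * (y:ℝ)⌋ - ⌊c * (p:ℝ)⌋ + ⌊c * (q:ℝ)⌋),
      Finset.add_mem_add (Finset.add_mem_add (Finset.mem_image_of_mem _ hy)
        (Finset.sub_mem_sub hx1 hx2)) ?_, (p1 - p2) + (q2 - q1),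
        Finset.add_mem_add (Finset.sub_mem_sub hp1 hp2) (Finset.sub_mem_sub hq2 hq1), ?_⟩
    · have hfl : (y:ℝ) + (p - q) = ⌊d * (a:ℝ)⌋ := by exact_mod_cast h1
      have t1 := Int.floor_le (d * (a:ℝ))
      have t2 := Int.lt_floor_add_one (d * (a:ℝ))
      rw [← hfl] at t1 t2
      have r1 := Int.floor_le (c * (y:ℝ))
      have r2 := Int.lt_floor_add_one (c * (y:ℝ))
      have r3 := Int.floor_le (c * (p:ℝ))
      have r4 := Int.lt_floor_add_one (c * (p:ℝ))
      have r5 := Int.floor_le (c * (q:ℝ))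
      have r6 := Int.lt_floor_add_one (c * (q:ℝ))
      have r7 := Int.floor_le (c * d * (a:ℝ))
      have r8 := Int.lt_floor_add_one (c * d * (a:ℝ))
      have hθ : |c * (d * a - (y + (p - q)))| ≤ |c| := by
        rw [abs_mul]
        have : |d * a - ((y:ℝ) + (p - q))| ≤ 1 := by
          rw [abs_le]; constructor <;> linarith
        nlinarith [abs_nonneg c]
      have hθ' := abs_le.1 hθ
      have hce := Int.le_ceil |c|
      have exp : c * (d * a - ((y:ℝ) + (p - q))) = c * d * a - c * y - c * p + c * q := by ring
      rw [exp] at hθ'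
      rw [Finset.mem_Icc, hE]
      have hr1 : (⌊c * d * (a:ℝ)⌋ : ℝ) - ⌊c * (y:ℝ)⌋ - ⌊c * (p:ℝ)⌋ + ⌊c * (q:ℝ)⌋ <
        ⌈|c|⌉ + 2 + 1 := by linarith [hθ'.1, hθ'.2]
      have hr2 : -((⌈|c|⌉:ℝ) + 2) - 1 < (⌊c * d * (a:ℝ)⌋ : ℝ) - ⌊c * (y:ℝ)⌋ - ⌊c * (p:ℝ)⌋ + ⌊c * (q:ℝ)⌋ := by linarith [hθ'.1, hθ'.2]
      have hi1 : ⌊c * d * (a:ℝ)⌋ - ⌊c * (y:ℝ)⌋ - ⌊c * (p:ℝ)⌋ + ⌊c * (q:ℝ)⌋ <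
        ⌈|c|⌉ + 2 + 1 := by exact_mod_cast hr1
      have hi2 : -(⌈|c|⌉ + 2) - 1 < ⌊c * d * (a:ℝ)⌋ - ⌊c * (y:ℝ)⌋ - ⌊c * (p:ℝ)⌋ + ⌊c * (q:ℝ)⌋ := by exact_mod_cast hr2
      omega
    · omega
  · refine (card_add_le_real _ _).trans ?_
    have h5 := card_add_le_real (Y.image (fun y : ℤ => ⌊c * (y:ℝ)⌋)) (X - X)
    have h5' : ((X - X).card : ℝ) ≤ X.card * X.card := by exact_mod_cast Finset.card_sub_le
    have h5bb : ((Y.image (fun y : ℤ => ⌊c * (y:ℝ)⌋)).card : ℝ) ≤ Y.card := by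
      exact_mod_cast Finset.card_image_le
    have hE0 : 0 ≤ ⌈|c|⌉ := Int.ceil_nonneg (abs_nonneg c)
    have hKb : 1 ≤ K ^ b := one_le_pow₀ hK1
    have h6 : ((Finset.Icc (-E) E).card : ℝ) ≤ K ^ (b + 1) := by
      rw [Int.card_Icc]
      have : ((E + 1 - -E).toNat : ℝ) = 2 * ⌈|c|⌉ + 5 := by
        have : ((E + 1 - -E).toNat : ℤ) = 2 * ⌈|c|⌉ + 5 := by omega
        exact_mod_cast this
      rw [this, pow_succ]
      have := Int.ceil_lt_add_one |c|
      nlinarith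
    calc _ ≤ (K ^ j * (K ^ i * K ^ i)) * K ^ (b + 1) := by
          gcongr
          refine h5.trans ?_
          gcongr
          · exact h5bb.trans hY
          · refine h5'.trans ?_
            gcongr
      _ = _ := by ring
  · rw [← add_assoc]
    exact card_32 A hA K hAA

lemma Good.inv (hK : 100 ≤ K) {i b : ℕ} {c : ℝ} (hb : 1 ≤ K ^ b * |c|)
    (hc : Good A K i c) : Good A K (i + b + 1) (1 / c) := by
  have hK1 : 1 ≤ K := by linarith
  have hK0 : 0 ≤ K := by linarith
  have hKb : 1 ≤ K ^ b := one_le_pow₀ hK1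
  have hc0 : c ≠ 0 := by
    rintro rfl
    simp at hb
    linarith
  have key := image_card_le (A ×ˢ A) (fun p : ℤ × ℤ => p.2 + ⌊c * (p.1:ℝ)⌋)
    (fun p : ℤ × ℤ => p.1 + ⌊1 / c * (p.2:ℝ)⌋) (K ^ b + 1) (by linarith) ?_
  · have e1 : (A ×ˢ A).image (fun p : ℤ × ℤ => p.1 + ⌊1 / c * (p.2:ℝ)⌋) = A + F A (1/c) := by
      ext v
      simp only [Finset.mem_image, Finset.mem_product, Finset.mem_add, F, Prod.exists]
      constructor
      · rintro ⟨a, a', ⟨h1, h2⟩, rfl⟩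
        exact ⟨a, h1, _, ⟨a', h2, rfl⟩, rfl⟩
      · rintro ⟨a, h1, _, ⟨a', h2, rfl⟩, rfl⟩
        exact ⟨a, a', ⟨h1, h2⟩, rfl⟩
    have e2 : (A ×ˢ A).image (fun p : ℤ × ℤ => p.2 + ⌊c * (p.1:ℝ)⌋) = A + F A c := by
      ext v
      simp only [Finset.mem_image, Finset.mem_product, Finset.mem_add, F, Prod.exists]
      constructor
      · rintro ⟨a, a', ⟨h1, h2⟩, rfl⟩
        exact ⟨a', h2, _, ⟨a, h1, rfl⟩, rfl⟩
      · rintro ⟨a, h1, _, ⟨a', h2, rfl⟩, rfl⟩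
        exact ⟨a', a, ⟨h2, h1⟩, rfl⟩
    rw [e1, e2] at key
    refine key.trans ?_
    have hc' : ((A + F A c).card : ℝ) ≤ K ^ i * A.card := hc
    calc (2 * (K ^ b + 1) + 1) * ((A + F A c).card : ℝ) ≤ (K ^ b * K) * (K ^ i * A.card) := by
          gcongr
          nlinarith
      _ = _ := by ring
  · rintro ⟨a, a'⟩ - ⟨d, d'⟩ - h
    simp only at h ⊢
    have hr : (a':ℝ) + ⌊c * (a:ℝ)⌋ = d' + ⌊c * (d:ℝ)⌋ := by exact_mod_cast h
    have r1 := Int.floor_le (c * (a:ℝ))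
    have r2 := Int.lt_floor_add_one (c * (a:ℝ))
    have r3 := Int.floor_le (c * (d:ℝ))
    have r4 := Int.lt_floor_add_one (c * (d:ℝ))
    have r5 := Int.floor_le (1 / c * (a':ℝ))
    have r6 := Int.lt_floor_add_one (1 / c * (a':ℝ))
    have r7 := Int.floor_le (1 / c * (d':ℝ))
    have r8 := Int.lt_floor_add_one (1 / c * (d':ℝ))
    have h1 : |c * ((a - d) + (1 / c * a' - 1 / c * d'))| ≤ 1 := by
      have : c * (((a:ℝ) - d) + (1 / c * a' - 1 / c * d')) = c * a - c * d + (a' - d') := by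
        field_simp
      rw [this, abs_le]
      constructor <;> linarith
    rw [abs_mul] at h1
    have h2 : |((a:ℝ) - d) + (1 / c * a' - 1 / c * d')| ≤ K ^ b := by
      have hcp := abs_pos.2 hc0
      set t := |((a:ℝ) - d) + (1 / c * a' - 1 / c * d')| with ht
      have ht0 : 0 ≤ t := abs_nonneg _
      have : |c| * t ≤ K ^ b * |c| := by linarith
      nlinarith
    have h3 := abs_le.1 h2
    push_cast
    rw [abs_le]
    constructor <;> linarith [h3.1, h3.2]

lemma good_nat (hA : A.Nonempty) (hK : 100 ≤ K)
    (hAA : ((A + A).card : ℝ) ≤ K * A.card) (m : ℕ) : Good A K (7 * m) (m : ℝ) := by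
  induction m with
  | zero =>
    unfold Good F
    simp [Finset.image_const hA]
  | succ m ih =>
    have h1 : Good A K 1 (1:ℝ) := by
      unfold Good F
      simpa using hAA
    have := ih.add hA hK hAA h1
    push_cast
    exact this.mono (by linarith) (by omega)

lemma good_int (hA : A.Nonempty) (hK : 100 ≤ K)
    (hAA : ((A + A).card : ℝ) ≤ K * A.card) (m : ℤ) : Good A K (7 * m.natAbs + 4) (m : ℝ) := by
  have h1 := good_nat hA hK hAA m.natAbs
  rcases Int.natAbs_eq m with h | h
  · have : (m:ℝ) = (m.natAbs : ℝ) := by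
      rw [show ((m.natAbs:ℕ):ℝ) = ((m.natAbs:ℤ):ℝ) by simp, ← h]
    rw [this]
    exact h1.mono (by linarith) (by omega)
  · have : (m:ℝ) = -(m.natAbs : ℝ) := by
      rw [show ((m.natAbs:ℕ):ℝ) = ((m.natAbs:ℤ):ℝ) by simp, ← Int.cast_neg, ← h]
    rw [this]
    exact h1.neg hA hK hAA

end DSP
end

section
open scoped Pointwise

namespace DSP

/-- non-concentration -/
def NC (A : Finset ℤ) (N s K : ℝ) : Prop :=
  ∀ S ⊆ A, ∀ l : ℝ, 1 ≤ l → (∀ x ∈ S, ∀ y ∈ S, |(x:ℝ) - y| ≤ l) →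
    (S.card : ℝ) ≤ K * (l / N) ^ s * A.card

lemma dense_of_halving (Q : Set ℝ) (η : ℝ) (hη : 0 ≤ η) (h0 : (0:ℝ) ∈ Q) (h1 : (1:ℝ) ∈ Q)
    (h : ∀ q ∈ Q, 0 ≤ q → q ≤ 1 → ∀ e : ℝ, e = 0 ∨ e = 1 → ∃ q' ∈ Q, |(q + e) / 2 - q'| ≤ η)
    (k : ℕ) : ∀ y : ℝ, 0 ≤ y → y ≤ 1 →
      ∃ q ∈ Q, 0 ≤ q ∧ q ≤ 1 ∧ |y - q| ≤ (1/2:ℝ) ^ k + 2 * η := by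
  induction k with
  | zero =>
    intro y hy0 hy1
    refine ⟨0, h0, le_refl _, zero_le_one, ?_⟩
    rw [sub_zero, abs_of_nonneg hy0]
    simp; linarith
  | succ k ih =>
    intro y hy0 hy1
    obtain ⟨e, he, hz0, hz1⟩ : ∃ e : ℝ, (e = 0 ∨ e = 1) ∧ 0 ≤ 2 * y - e ∧ 2 * y - e ≤ 1 := by
      rcases le_total y (1/2) with hy | hy
      · exact ⟨0, Or.inl rfl, by linarith, by linarith⟩
      · exact ⟨1, Or.inr rfl, by linarith, by linarith⟩
    obtain ⟨q, hq, hq0, hq1, hqy⟩ := ih _ hz0 hz1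
    obtain ⟨q', hq', hqq⟩ := h q hq hq0 hq1 e he
    have he0 : 0 ≤ e := by rcases he with rfl | rfl <;> norm_num
    have he1 : e ≤ 1 := by rcases he with rfl | rfl <;> norm_num
    have key : ∃ qbb ∈ Q, 0 ≤ qbb ∧ qbb ≤ 1 ∧ |(q + e) / 2 - qbb| ≤ η := by
      rcases le_total q' 0 with hn | hn
      · refine ⟨0, h0, le_refl _, zero_le_one, ?_⟩
        rw [abs_le] at hqq ⊢
        constructor <;> linarith [hqq.1, hqq.2]
      · rcases le_total q' 1 with hn1 | hn1
        · exact ⟨q', hq', hn, hn1, hqq⟩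
        · refine ⟨1, h1, zero_le_one, le_refl _, ?_⟩
          rw [abs_le] at hqq ⊢
          constructor <;> linarith [hqq.1, hqq.2]
    obtain ⟨qbb, hqbb, a0, a1, a2⟩ := key
    refine ⟨qbb, hqbb, a0, a1, ?_⟩
    rw [abs_le] at a2 hqy ⊢
    rw [pow_succ]
    constructor <;> linarith [a2.1, a2.2, hqy.1, hqy.2]

lemma floor2_close {x x' y y' : ℝ} (h : ⌊x⌋ + ⌊y⌋ = ⌊x'⌋ + ⌊y'⌋) : |(x - x') + (y - y')| < 2 := by
  have hr : (⌊x⌋:ℝ) + ⌊y⌋ = ⌊x'⌋ + ⌊y'⌋ := by exact_mod_cast h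
  have := Int.floor_le x
  have := Int.lt_floor_add_one x
  have := Int.floor_le y
  have := Int.lt_floor_add_one y
  have := Int.floor_le x'
  have := Int.lt_floor_add_one x'
  have := Int.floor_le y'
  have := Int.lt_floor_add_one y'
  rw [abs_lt]
  constructor <;> linarith

lemma floor2_dist (x x' y y' : ℝ) :
    |((⌊x⌋ + ⌊y⌋ : ℤ) : ℝ) - ((⌊x'⌋ + ⌊y'⌋ : ℤ) : ℝ)| ≤ |x - x'| + |y - y'| + 2 := by
  push_cast
  have := Int.floor_le x
  have := Int.lt_floor_add_one x
  have := Int.floor_le y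
  have := Int.lt_floor_add_one y
  have := Int.floor_le x'
  have := Int.lt_floor_add_one x'
  have := Int.floor_le y'
  have := Int.lt_floor_add_one y'
  have := le_abs_self (x - x')
  have := neg_abs_le (x - x')
  have := le_abs_self (y - y')
  have := neg_abs_le (y - y')
  rw [abs_le]
  constructor <;> linarith

variable {A A' : Finset ℤ} {K N s : ℝ}

/-- the image set of two dilates of a set -/
noncomputable def SS (A' : Finset ℤ) (c1 c2 : ℝ) : Finset ℤ :=
  (A' ×ˢ A').image (fun p : ℤ × ℤ => ⌊c1 * (p.1:ℝ)⌋ + ⌊c2 * (p.2:ℝ)⌋)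

lemma card_add_SS (hA : A.Nonempty) (hK : 100 ≤ K)
    (hAA : ((A + A).card : ℝ) ≤ K * A.card) (hA' : A' ⊆ A) {j : ℕ} {c1 c2 : ℝ}
    (h1 : Good A K j c1) (h2 : Good A K j c2) :
    ((A + SS A' c1 c2).card : ℝ) ≤ K ^ (2 * j + 5) * A.card := by
  have := good_two hA (by linarith) hAA h1 h2
  rw [show j + j + 5 = 2 * j + 5 by ring] at this
  refine le_trans ?_ this
  have hsub : A + SS A' c1 c2 ⊆ A + F A c1 + F A c2 := by
    rw [add_assoc]
    apply Finset.add_subset_add_left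
    intro v hv
    obtain ⟨p, hp, rfl⟩ := Finset.mem_image.1 hv
    rw [Finset.mem_product] at hp
    exact Finset.add_mem_add (mem_F (hA' hp.1)) (mem_F (hA' hp.2))
  exact_mod_cast Finset.card_le_card hsub

lemma card_SS_le (hA : A.Nonempty) (hK : 100 ≤ K)
    (hAA : ((A + A).card : ℝ) ≤ K * A.card) (hA' : A' ⊆ A) {j : ℕ} {c1 c2 : ℝ}
    (h1 : Good A K j c1) (h2 : Good A K j c2) :
    ((SS A' c1 c2).card : ℝ) ≤ K ^ (2 * j + 5) * A.card := by
  refine le_trans ?_ (card_add_SS hA hK hAA hA' h1 h2)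
  exact_mod_cast Finset.card_le_card_add_left hA

set_option maxHeartbeats 1000000 in
lemma gap_case (hN : 1 ≤ N) (hs0 : 0 < s) (hs1 : s < 1) (hA : A.Nonempty) (hK : 100 ≤ K)
    (hAA : ((A + A).card : ℝ) ≤ K * A.card) (hNC : NC A N s K)
    (hM : (A.card : ℝ) ≤ K * N ^ s) (hA0 : ∀ a ∈ A, 0 ≤ (a:ℝ) ∧ (a:ℝ) ≤ N)
    (hA' : A' ⊆ A) {J j : ℕ} (hJ : (A.card : ℝ) ≤ K ^ J * A'.card)
    {c1 c2 D U : ℝ} (hD1 : 1 ≤ D) (hDN : D ≤ N) (hU : 1 ≤ U)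
    (h1 : Good A K j c1) (h2 : Good A K j c2)
    (hc1 : |c1| * N ≤ 2 * D * K ^ J) (hc2 : |c2| * N ≤ 2 * D * K ^ J)
    (hfib : ∀ a ∈ A', ∀ a' ∈ A', ∀ b ∈ A', ∀ b' ∈ A',
      ⌊c1 * (a:ℝ)⌋ + ⌊c2 * (a':ℝ)⌋ = ⌊c1 * (b:ℝ)⌋ + ⌊c2 * (b':ℝ)⌋ → |(a':ℝ) - b'| ≤ U)
    (hfib2 : ∀ a ∈ A', ∀ b ∈ A', ∀ a' ∈ A',
      ⌊c1 * (a:ℝ)⌋ + ⌊c2 * (a':ℝ)⌋ = ⌊c1 * (b:ℝ)⌋ + ⌊c2 * (a':ℝ)⌋ → |(a:ℝ) - b| ≤ N / D) :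
    (N / U) ^ s ≤ K ^ (3 * J + 2 * j + 10) := by
  have hK0 : 0 < K := by linarith
  have hK1 : 1 ≤ K := by linarith
  have hN0 : 0 < N := by linarith
  have hKJ : 1 ≤ K ^ J := one_le_pow₀ hK1
  have hMpos : (0:ℝ) < A.card := by exact_mod_cast hA.card_pos
  set M : ℝ := (A.card : ℝ) with hMdef
  set W : ℝ := ((SS A' c1 c2).card : ℝ) with hW
  have hW0 : 0 ≤ W := by positivity
  set R : ℝ := 6 * D * K ^ J with hR
  have hR1 : 1 ≤ R := by rw [hR]; nlinarith
  -- upper bound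
  have up : M * W ≤ (K * (R / N) ^ s * M) * (K ^ (2 * j + 5) * M) := by
    have e1 := card_le_fib (A ×ˢ SS A' c1 c2) (fun p : ℤ × ℤ => p.1 + p.2) (K * (R / N) ^ s * M) ?_
    · have e2 : (A ×ˢ SS A' c1 c2).image (fun p : ℤ × ℤ => p.1 + p.2) = A + SS A' c1 c2 := rfl
      rw [e2, Finset.card_product] at e1
      push_cast at e1
      refine e1.trans ?_
      gcongr
      exact card_add_SS hA hK hAA hA' h1 h2
    · intro v
      set T := (A ×ˢ SS A' c1 c2).filter (fun p : ℤ × ℤ => p.1 + p.2 = v) with hT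
      have einj : (T.image Prod.fst).card = T.card := by
        apply Finset.card_image_of_injOn
        rintro ⟨a, b⟩ hp ⟨a', b'⟩ hq h
        simp only [hT, Finset.coe_filter, Set.mem_ofPred_eq] at hp hq h
        ext
        · exact h
        · have := hp.2
          have := hq.2
          simp only
          omega
      rw [← einj]
      apply hNC _ _ R hR1
      · intro x hx y hy
        obtain ⟨⟨a, b⟩, hp, rfl⟩ := Finset.mem_image.1 hx
        obtain ⟨⟨a', b'⟩, hq, rfl⟩ := Finset.mem_image.1 hy
        rw [hT, Finset.mem_filter, Finset.mem_product] at hp hq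
        obtain ⟨⟨-, hb⟩, e⟩ := hp
        obtain ⟨⟨-, hb'⟩, e'⟩ := hq
        simp only at hb hb' e e' ⊢
        have hab : (a:ℝ) - a' = b' - b := by
          have : a - a' = b' - b := by omega
          exact_mod_cast this
        rw [hab]
        obtain ⟨⟨u, u'⟩, hu, rfl⟩ := Finset.mem_image.1 hb
        obtain ⟨⟨w, w'⟩, hw, rfl⟩ := Finset.mem_image.1 hb'
        rw [Finset.mem_product] at hu hw
        simp only at hu hw ⊢
        have du := hA0 _ (hA' hu.1)
        have du' := hA0 _ (hA' hu.2)
        have dw := hA0 _ (hA' hw.1)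
        have dw' := hA0 _ (hA' hw.2)
        refine (floor2_dist _ _ _ _).trans ?_
        rw [← mul_sub, ← mul_sub, abs_mul, abs_mul]
        have i1 : |(w:ℝ) - u| ≤ N := by rw [abs_le]; constructor <;> linarith
        have i2 : |(w':ℝ) - u'| ≤ N := by rw [abs_le]; constructor <;> linarith
        have i3 : |c1| * |(w:ℝ) - u| ≤ |c1| * N := by gcongr
        have i4 : |c2| * |(w':ℝ) - u'| ≤ |c2| * N := by gcongr
        nlinarith
      · intro x hx
        obtain ⟨⟨a, b⟩, hp, rfl⟩ := Finset.mem_image.1 hx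
        rw [hT, Finset.mem_filter, Finset.mem_product] at hp
        exact hp.1.1
  -- lower bound
  have lo : (A'.card : ℝ) * A'.card ≤ ((K * (N / D / N) ^ s * M) * (K * (U / N) ^ s * M)) * W := by
    have e1 := card_le_fib (A' ×ˢ A')
      (fun p : ℤ × ℤ => ⌊c1 * (p.1:ℝ)⌋ + ⌊c2 * (p.2:ℝ)⌋)
      ((K * (N / D / N) ^ s * M) * (K * (U / N) ^ s * M)) ?_
    · rw [Finset.card_product] at e1
      push_cast at e1
      exact e1
    · intro v
      set T := (A' ×ˢ A').filter
        (fun p : ℤ × ℤ => ⌊c1 * (p.1:ℝ)⌋ + ⌊c2 * (p.2:ℝ)⌋ = v) with hT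
      have hTm : ∀ p ∈ T, p.1 ∈ A' ∧ p.2 ∈ A' ∧ ⌊c1 * (p.1:ℝ)⌋ + ⌊c2 * (p.2:ℝ)⌋ = v := by
        intro p hp
        rw [hT, Finset.mem_filter, Finset.mem_product] at hp
        exact ⟨hp.1.1, hp.1.2, hp.2⟩
      have e2 := card_le_fib T Prod.snd (K * (N / D / N) ^ s * M) ?_
      · refine e2.trans ?_
        gcongr
        apply hNC _ _ U hU
        · intro x hx y hy
          obtain ⟨p, hp, rfl⟩ := Finset.mem_image.1 hx
          obtain ⟨q, hq, rfl⟩ := Finset.mem_image.1 hy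
          obtain ⟨p1, p2, p3⟩ := hTm p hp
          obtain ⟨q1, q2, q3⟩ := hTm q hq
          exact hfib _ p1 _ p2 _ q1 _ q2 (p3.trans q3.symm)
        · intro x hx
          obtain ⟨p, hp, rfl⟩ := Finset.mem_image.1 hx
          exact hA' (hTm p hp).2.1
      · intro y
        set T2 := T.filter (fun p => p.2 = y) with hT2
        have einj : (T2.image Prod.fst).card = T2.card := by
          apply Finset.card_image_of_injOn
          rintro ⟨a, b⟩ hp ⟨a', b'⟩ hq h
          simp only [hT2, Finset.coe_filter, Set.mem_ofPred_eq] at hp hq h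
          ext
          · exact h
          · exact hp.2.trans hq.2.symm
        rw [← einj]
        apply hNC _ _ (N / D) ((one_le_div (by linarith)).2 hDN)
        · intro x hx x' hx'
          obtain ⟨⟨a, b⟩, hp, rfl⟩ := Finset.mem_image.1 hx
          obtain ⟨⟨a', b'⟩, hq, rfl⟩ := Finset.mem_image.1 hx'
          rw [hT2, Finset.mem_filter] at hp hq
          obtain ⟨p1, p2, p3⟩ := hTm _ hp.1
          obtain ⟨q1, q2, q3⟩ := hTm _ hq.1
          have hb : b = y := hp.2
          have hb' : b' = y := hq.2
          subst hb
          subst hb'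
          exact hfib2 _ p1 _ q1 _ p2 (p3.trans q3.symm)
        · intro x hx
          obtain ⟨p, hp, rfl⟩ := Finset.mem_image.1 hx
          rw [hT2, Finset.mem_filter] at hp
          exact hA' (hTm p hp.1).1
  -- combine
  have hDs : 0 < D ^ s := Real.rpow_pos_of_pos (by linarith) s
  have hNs : 0 < N ^ s := Real.rpow_pos_of_pos hN0 s
  have hUs : 0 < U ^ s := Real.rpow_pos_of_pos (by linarith) s
  have r1 : (N / D / N) ^ s = (D ^ s)⁻¹ := by
    rw [show N / D / N = D⁻¹ by field_simp, Real.inv_rpow (by linarith)]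
  have r2 : (U / N) ^ s = U ^ s / N ^ s := Real.div_rpow (by linarith) hN0.le s
  have r3 : (R / N) ^ s ≤ K ^ (J + 1) * (D ^ s / N ^ s) := by
    rw [← Real.div_rpow (by linarith) hN0.le s, hR,
      show 6 * D * K ^ J / N = (6 * K ^ J) * (D / N) by ring,
      Real.mul_rpow (by positivity) (by positivity)]
    gcongr
    calc (6 * K ^ J) ^ s ≤ (6 * K ^ J) ^ (1:ℝ) :=
          Real.rpow_le_rpow_of_exponent_le (by nlinarith) hs1.le
      _ = 6 * K ^ J := Real.rpow_one _
      _ ≤ K ^ (J + 1) := by rw [pow_succ]; nlinarith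
  rw [r1, r2] at lo
  have up2 : W ≤ K ^ (2 * j + J + 7) * (D ^ s / N ^ s) * M := by
    have : M * W ≤ M * (K ^ (2 * j + J + 7) * (D ^ s / N ^ s) * M) := by
      calc M * W ≤ (K * (R / N) ^ s * M) * (K ^ (2 * j + 5) * M) := up
        _ ≤ (K * (K ^ (J + 1) * (D ^ s / N ^ s)) * M) * (K ^ (2 * j + 5) * M) := by gcongr
        _ = _ := by ring
    exact le_of_mul_le_mul_left this hMpos
  have fin : M * M ≤ K ^ (3 * J + 2 * j + 10) * (U ^ s / N ^ s) * (M * M) := by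
    calc M * M ≤ (K ^ J * A'.card) * (K ^ J * A'.card) := by gcongr
      _ = K ^ (2 * J) * ((A'.card:ℝ) * A'.card) := by ring
      _ ≤ K ^ (2 * J) * (K * (D ^ s)⁻¹ * M * (K * (U ^ s / N ^ s) * M) *
            (K ^ (2 * j + J + 7) * (D ^ s / N ^ s) * M)) :=
          mul_le_mul_of_nonneg_left
            (lo.trans (mul_le_mul_of_nonneg_left up2 (by positivity))) (by positivity)
      _ ≤ K ^ (2 * J) * (K * (D ^ s)⁻¹ * M * (K * (U ^ s / N ^ s) * M) *
            (K ^ (2 * j + J + 7) * (D ^ s / N ^ s) * (K * N ^ s))) := by gcongr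
      _ = _ := by field_simp; ring
  rw [Real.div_rpow hN0.le (by linarith), div_le_iff₀ hUs]
  have f2 : 1 ≤ K ^ (3 * J + 2 * j + 10) * (U ^ s / N ^ s) := by
    have : 0 < M * M := by positivity
    exact le_of_mul_le_mul_right (by rw [one_mul]; exact fin) this
  rw [← mul_div_assoc, le_div_iff₀ hNs, one_mul] at f2
  exact f2

end DSP
end

section
open scoped Pointwise

namespace DSP
variable {A A' : Finset ℤ} {K N s : ℝ}

lemma near_count (hA' : A' ⊆ A) (hK : 100 ≤ K) (hN : 1 ≤ N) (hNC : NC A N s K)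
    {V T y : ℝ} (hV : 1 ≤ V) (hT : 1 ≤ T)
    (Q : Finset ((ℤ × ℤ) × (ℤ × ℤ))) (hQ : Q ⊆ (A' ×ˢ A') ×ˢ (A' ×ˢ A'))
    (h1 : ∀ p ∈ Q, |(p.1.2:ℝ) - p.2.2| ≤ V)
    (h2 : ∀ p ∈ Q, |((p.1.1:ℝ) - p.2.1) + y * ((p.1.2:ℝ) - p.2.2)| ≤ T) :
    (Q.card : ℝ) ≤ (K * (2 * T / N) ^ s * A.card) * (K * (2 * V / N) ^ s * A.card) *
      ((A.card:ℝ) * A.card) := by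
  have hmem : ∀ p ∈ Q, (p.1.1 ∈ A' ∧ p.1.2 ∈ A') ∧ (p.2.1 ∈ A' ∧ p.2.2 ∈ A') := by
    intro p hp
    have := hQ hp
    simpa only [Finset.mem_product] using this
  have hK0 : 0 < K := by linarith
  have e1 := card_le_fib Q Prod.fst
    ((K * (2 * T / N) ^ s * A.card) * (K * (2 * V / N) ^ s * A.card)) ?_
  · refine e1.trans ?_
    gcongr
    have : (Q.image Prod.fst) ⊆ A ×ˢ A := by
      intro x hx
      obtain ⟨p, hp, rfl⟩ := Finset.mem_image.1 hx
      have := (hmem p hp).1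
      exact Finset.mem_product.2 ⟨hA' this.1, hA' this.2⟩
    have := Finset.card_le_card this
    rw [Finset.card_product] at this
    exact_mod_cast this
  · intro c
    set Q1 := Q.filter (fun p => p.1 = c) with hQ1
    have m1 : ∀ p ∈ Q1, p ∈ Q ∧ p.1 = c := fun p hp => Finset.mem_filter.1 hp
    have e2 := card_le_fib Q1 (fun p => p.2.2) (K * (2 * T / N) ^ s * A.card) ?_
    · refine e2.trans ?_
      gcongr
      apply hNC _ _ (2 * V) (by linarith)
      · intro x hx x' hx'
        obtain ⟨p, hp, rfl⟩ := Finset.mem_image.1 hx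
        obtain ⟨q, hq, rfl⟩ := Finset.mem_image.1 hx'
        have a1 := h1 p (m1 p hp).1
        have a2 := h1 q (m1 q hq).1
        rw [(m1 p hp).2] at a1
        rw [(m1 q hq).2] at a2
        rw [abs_le] at a1 a2 ⊢
        constructor <;> linarith [a1.1, a1.2, a2.1, a2.2]
      · intro x hx
        obtain ⟨p, hp, rfl⟩ := Finset.mem_image.1 hx
        exact hA' (hmem p (m1 p hp).1).2.2
    · intro z
      set Q2 := Q1.filter (fun p => p.2.2 = z) with hQ2
      have m2 : ∀ p ∈ Q2, p ∈ Q ∧ p.1 = c ∧ p.2.2 = z := fun p hp =>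
        ⟨(m1 p (Finset.mem_filter.1 hp).1).1, (m1 p (Finset.mem_filter.1 hp).1).2,
          (Finset.mem_filter.1 hp).2⟩
      have einj : (Q2.image (fun p => p.2.1)).card = Q2.card := by
        apply Finset.card_image_of_injOn
        intro p hp q hq h
        obtain ⟨-, p1, p2⟩ := m2 p hp
        obtain ⟨-, q1, q2⟩ := m2 q hq
        refine Prod.ext (p1.trans q1.symm) (Prod.ext h (p2.trans q2.symm))
      rw [← einj]
      apply hNC _ _ (2 * T) (by linarith)
      · intro x hx x' hx'
        obtain ⟨p, hp, rfl⟩ := Finset.mem_image.1 hx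
        obtain ⟨q, hq, rfl⟩ := Finset.mem_image.1 hx'
        obtain ⟨p0, p1, p2⟩ := m2 p hp
        obtain ⟨q0, q1, q2⟩ := m2 q hq
        have a1 := h2 p p0
        have a2 := h2 q q0
        rw [p1, p2] at a1
        rw [q1, q2] at a2
        rw [abs_le] at a1 a2 ⊢
        constructor <;> linarith [a1.1, a1.2, a2.1, a2.2]
      · intro x hx
        obtain ⟨p, hp, rfl⟩ := Finset.mem_image.1 hx
        exact hA' (hmem p (m2 p hp).1).2.1

set_option maxHeartbeats 1000000 in
lemma dense_case (hN : 1 ≤ N) (hs0 : 0 < s) (hs1 : s < 1) (hA : A.Nonempty) (hK : 100 ≤ K)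
    (hAA : ((A + A).card : ℝ) ≤ K * A.card) (hNC : NC A N s K)
    (hM : (A.card : ℝ) ≤ K * N ^ s)
    (hA' : A' ⊆ A) {J j : ℕ} (hJ : (A.card : ℝ) ≤ K ^ J * A'.card)
    {g : ℝ} (hg : g = (1 - s) / 10)
    (hE : ∀ y : ℝ, 0 ≤ y → y ≤ 1 → ∃ c1 c2 : ℝ, Good A K j c1 ∧ Good A K j c2 ∧
      ∀ a ∈ A', ∀ a' ∈ A', ∀ b ∈ A', ∀ b' ∈ A',
      ⌊c1 * (a:ℝ)⌋ + ⌊c2 * (a':ℝ)⌋ = ⌊c1 * (b:ℝ)⌋ + ⌊c2 * (b':ℝ)⌋ →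
        |((a:ℝ) - b) + y * ((a':ℝ) - b')| ≤ 5 * N ^ (2 * g)) :
    N ^ (g * s) ≤ K ^ (4 * J + 2 * j + 9) := by
  have hK0 : 0 < K := by linarith
  have hK1 : 1 ≤ K := by linarith
  have hN0 : 0 < N := by linarith
  have hg0 : 0 < g := by rw [hg]; linarith
  have hMpos : (0:ℝ) < A.card := by exact_mod_cast hA.card_pos
  set M : ℝ := (A.card : ℝ) with hMdef
  set T : ℝ := 5 * N ^ (2 * g) with hT
  set V : ℝ := N ^ (1 - 3 * g) with hV
  set x : ℝ := N ^ (g * s) with hx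
  have hx1 : 1 ≤ x := Real.one_le_rpow hN (by positivity)
  have hNg : 1 ≤ N ^ (2 * g) := Real.one_le_rpow hN (by positivity)
  have hV1 : 1 ≤ V := Real.one_le_rpow hN (by rw [hg]; linarith)
  have hT1 : 1 ≤ T := by rw [hT]; linarith
  set I : Finset ℤ := Finset.Ico 0 ⌈N⌉ with hI
  set n : ℝ := (⌈N⌉ : ℝ) with hn
  have hnN : N ≤ n := Int.le_ceil N
  have hn2 : n ≤ 2 * N := by have := Int.ceil_lt_add_one N; linarith
  have hn0 : 0 < n := by linarith
  have hIcard : (I.card : ℝ) = n := by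
    rw [hI, Int.card_Ico, hn]
    have : ((⌈N⌉ - 0).toNat : ℤ) = ⌈N⌉ := by
      have : 0 ≤ ⌈N⌉ := Int.ceil_nonneg hN0.le
      omega
    exact_mod_cast this
  set QQ := (A' ×ˢ A') ×ˢ (A' ×ˢ A') with hQQ
  -- lower bound for each y
  let r : ℤ → ((ℤ × ℤ) × (ℤ × ℤ)) → Prop := fun i p =>
    |((p.1.1:ℝ) - p.2.1) + ((i:ℝ) / n) * ((p.1.2:ℝ) - p.2.2)| ≤ T
  let r' : ℤ → ((ℤ × ℤ) × (ℤ × ℤ)) → Prop := fun i p => V ≤ |(p.1.2:ℝ) - p.2.2| ∧ r i p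
  have lower : ∀ i ∈ I, M ^ 3 ≤ K ^ (4 * J + 2 * j + 5) * ((QQ.filter (r i)).card : ℝ) := by
    intro i hi
    rw [hI, Finset.mem_Ico] at hi
    have hi0 : (0:ℝ) ≤ i := by exact_mod_cast hi.1
    have hi1 : (i:ℝ) ≤ n := by rw [hn]; exact_mod_cast hi.2.le
    obtain ⟨c1, c2, g1, g2, hcl⟩ := hE (i / n) (by positivity) ((div_le_one hn0).2 hi1)
    have en := energy_lower (A' ×ˢ A') (fun p : ℤ × ℤ => ⌊c1 * (p.1:ℝ)⌋ + ⌊c2 * (p.2:ℝ)⌋)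
    have sub : ((A' ×ˢ A') ×ˢ (A' ×ˢ A')).filter (fun p : (ℤ × ℤ) × (ℤ × ℤ) =>
        ⌊c1 * (p.1.1:ℝ)⌋ + ⌊c2 * (p.1.2:ℝ)⌋ = ⌊c1 * (p.2.1:ℝ)⌋ + ⌊c2 * (p.2.2:ℝ)⌋)
        ⊆ QQ.filter (r i) := by
      intro p hp
      rw [Finset.mem_filter] at hp ⊢
      refine ⟨hp.1, ?_⟩
      have hp1 := hp.1
      simp only [Finset.mem_product] at hp1
      exact hcl _ hp1.1.1 _ hp1.1.2 _ hp1.2.1 _ hp1.2.2 hp.2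
    have sub' : ((((A' ×ˢ A') ×ˢ (A' ×ˢ A')).filter (fun p : (ℤ × ℤ) × (ℤ × ℤ) =>
        ⌊c1 * (p.1.1:ℝ)⌋ + ⌊c2 * (p.1.2:ℝ)⌋ = ⌊c1 * (p.2.1:ℝ)⌋ + ⌊c2 * (p.2.2:ℝ)⌋)).card : ℝ)
        ≤ ((QQ.filter (r i)).card : ℝ) := by exact_mod_cast Finset.card_le_card sub
    have hW : (((A' ×ˢ A').image (fun p : ℤ × ℤ => ⌊c1 * (p.1:ℝ)⌋ + ⌊c2 * (p.2:ℝ)⌋)).card : ℝ)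
        ≤ K ^ (2 * j + 5) * M := card_SS_le hA hK hAA hA' g1 g2
    rw [Finset.card_product] at en
    push_cast at en
    have en2 : ((A'.card:ℝ) * A'.card) ^ 2 ≤
        (K ^ (2 * j + 5) * M) * ((QQ.filter (r i)).card : ℝ) := by
      refine en.trans ?_
      gcongr
    have : M * M ^ 3 ≤ M * (K ^ (4 * J + 2 * j + 5) * ((QQ.filter (r i)).card : ℝ)) := by
      calc M * M ^ 3 = M ^ 4 := by ring
        _ ≤ (K ^ J * A'.card) ^ 4 := by gcongr
        _ = K ^ (4 * J) * ((A'.card:ℝ) * A'.card) ^ 2 := by ring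
        _ ≤ K ^ (4 * J) * ((K ^ (2 * j + 5) * M) * ((QQ.filter (r i)).card : ℝ)) := by gcongr
        _ = _ := by ring
    exact le_of_mul_le_mul_left this hMpos
  -- powers
  have p1 : (2 * V / N) ^ s ≤ 2 * (x ^ 3)⁻¹ := by
    have : 2 * V / N = 2 * N ^ (-(3 * g)) := by
      rw [hV, show (1 - 3 * g) = 1 + -(3*g) by ring, Real.rpow_add hN0, Real.rpow_one]
      field_simp
    rw [this, Real.mul_rpow (by norm_num) (by positivity), ← Real.rpow_mul hN0.le]
    have e : N ^ (-(3 * g) * s) = (x ^ 3)⁻¹ := by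
      rw [hx, ← Real.rpow_natCast, ← Real.rpow_mul hN0.le, ← Real.rpow_neg hN0.le]
      congr 1; push_cast; ring
    rw [e]
    gcongr
    calc (2:ℝ) ^ s ≤ 2 ^ (1:ℝ) := Real.rpow_le_rpow_of_exponent_le (by norm_num) hs1.le
      _ = 2 := Real.rpow_one _
  have hNs : 0 < N ^ s := Real.rpow_pos_of_pos hN0 s
  have p2 : (2 * T / N) ^ s ≤ 10 * (x ^ 2 / N ^ s) := by
    have : 2 * T / N = 10 * (N ^ (2 * g) / N) := by rw [hT]; ring
    rw [this, Real.mul_rpow (by norm_num) (by positivity), Real.div_rpow (by positivity) hN0.le,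
      ← Real.rpow_mul hN0.le]
    have e : N ^ (2 * g * s) = x ^ 2 := by
      rw [hx, ← Real.rpow_natCast, ← Real.rpow_mul hN0.le]
      congr 1; push_cast; ring
    rw [e]
    gcongr
    calc (10:ℝ) ^ s ≤ 10 ^ (1:ℝ) := Real.rpow_le_rpow_of_exponent_le (by norm_num) hs1.le
      _ = 10 := Real.rpow_one _
  -- near part
  have near : ∀ i ∈ I, ((QQ.filter (r i)).card : ℝ) ≤
      20 * K ^ 3 * M ^ 3 / x + ((QQ.filter (r' i)).card : ℝ) := by
    intro i hi
    have sub : QQ.filter (r i) ⊆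
        QQ.filter (fun p => |(p.1.2:ℝ) - p.2.2| ≤ V ∧ r i p) ∪ QQ.filter (r' i) := by
      intro p hp
      rw [Finset.mem_filter] at hp
      rw [Finset.mem_union, Finset.mem_filter, Finset.mem_filter]
      rcases le_total (|(p.1.2:ℝ) - p.2.2|) V with h | h
      · exact Or.inl ⟨hp.1, h, hp.2⟩
      · exact Or.inr ⟨hp.1, h, hp.2⟩
    have c1 : ((QQ.filter (r i)).card : ℝ) ≤
        ((QQ.filter (fun p => |(p.1.2:ℝ) - p.2.2| ≤ V ∧ r i p)).card : ℝ) +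
          ((QQ.filter (r' i)).card : ℝ) := by
      exact_mod_cast (Finset.card_le_card sub).trans (Finset.card_union_le _ _)
    have c2 := near_count (y := (i:ℝ)/n) hA' hK hN hNC hV1 hT1
      (QQ.filter (fun p => |(p.1.2:ℝ) - p.2.2| ≤ V ∧ r i p)) (Finset.filter_subset _ _)
      (fun p hp => (Finset.mem_filter.1 hp).2.1) (fun p hp => (Finset.mem_filter.1 hp).2.2)
    have c3 : K * (2 * T / N) ^ s * M * (K * (2 * V / N) ^ s * M) * (M * M) ≤
        20 * K ^ 3 * M ^ 3 / x := by
      calc K * (2 * T / N) ^ s * M * (K * (2 * V / N) ^ s * M) * (M * M)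
          ≤ K * (10 * (x ^ 2 / N ^ s)) * M * (K * (2 * (x ^ 3)⁻¹) * M) * (M * (K * N ^ s)) := by
            gcongr
        _ = _ := by field_simp; ring
    linarith
  -- far part
  have far : ∑ i ∈ I, ((QQ.filter (r' i)).card : ℝ) ≤ 41 * K * M ^ 3 * n / x := by
    have sw := Finset.sum_card_bipartiteAbove_eq_sum_card_bipartiteBelow (s := I) (t := QQ) r'
    have sw' : ∑ i ∈ I, ((QQ.filter (r' i)).card : ℝ) =
        ∑ p ∈ QQ, ((I.filter (fun i => r' i p)).card : ℝ) := by
      exact_mod_cast sw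
    rw [sw']
    have each : ∀ p ∈ QQ, ((I.filter (fun i => r' i p)).card : ℝ) ≤ 41 * N ^ (5 * g) := by
      intro p hp
      have h5 : 1 ≤ N ^ (5 * g) := Real.one_le_rpow hN (by positivity)
      have hTV : T * n / V ≤ 10 * N ^ (5 * g) := by
        rw [div_le_iff₀ (by linarith)]
        have : N ^ (5 * g) * V = N ^ (2 * g) * N := by
          rw [hV, ← Real.rpow_add hN0]
          nth_rewrite 3 [← Real.rpow_one N]
          rw [← Real.rpow_add hN0]
          congr 1; ring
        rw [mul_assoc 10, this, hT]
        have : N ^ (2 * g) * n ≤ N ^ (2 * g) * (2 * N) := by gcongr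
        nlinarith
      have := int_diam_card (I.filter (fun i => r' i p)) (2 * (T * n / V)) (by positivity) ?_
      · linarith
      · intro i hi i' hi'
        have a1 := (Finset.mem_filter.1 hi).2.2
        have a2 := (Finset.mem_filter.1 hi').2.2
        have a3 := (Finset.mem_filter.1 hi).2.1
        simp only [r] at a1 a2
        set Δ := (p.1.2:ℝ) - p.2.2 with hΔ
        have b1 : |((i:ℝ) / n - i' / n) * Δ| ≤ 2 * T := by
          rw [abs_le] at a1 a2 ⊢
          constructor <;> linarith [a1.1, a1.2, a2.1, a2.2]
        have b2 : |((i:ℝ) - i')| * |Δ| ≤ 2 * T * n := by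
          have : ((i:ℝ) / n - i' / n) * Δ = ((i:ℝ) - i') * Δ / n := by field_simp
          rw [this, abs_div, abs_of_pos hn0, div_le_iff₀ hn0, abs_mul] at b1
          exact b1
        have b3 : |((i:ℝ) - i')| * V ≤ 2 * T * n :=
          le_trans (by gcongr) b2
        rw [show 2 * (T * n / V) = 2 * T * n / V by ring, le_div_iff₀ (by linarith)]
        exact b3
    have hcard : (QQ.card : ℝ) ≤ M ^ 4 := by
      rw [hQQ]
      simp only [Finset.card_product]
      push_cast
      have : (A'.card : ℝ) ≤ M := by rw [hMdef]; exact_mod_cast Finset.card_le_card hA'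
      calc ((A'.card:ℝ) * A'.card) * (A'.card * A'.card) = (A'.card:ℝ) ^ 4 := by ring
        _ ≤ _ := by gcongr
    calc ∑ p ∈ QQ, ((I.filter (fun i => r' i p)).card : ℝ) ≤ ∑ p ∈ QQ, 41 * N ^ (5 * g) :=
          Finset.sum_le_sum each
      _ = QQ.card * (41 * N ^ (5 * g)) := by rw [Finset.sum_const, nsmul_eq_mul]
      _ ≤ M ^ 4 * (41 * N ^ (5 * g)) := by gcongr
      _ = 41 * M ^ 3 * N ^ (5 * g) * M := by ring
      _ ≤ 41 * M ^ 3 * N ^ (5 * g) * (K * N ^ s) := by gcongr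
      _ ≤ 41 * K * M ^ 3 * n / x := by
        rw [le_div_iff₀ (by linarith)]
        have hxx : x ≤ N ^ (5 * g) := by
          rw [hx]
          apply Real.rpow_le_rpow_of_exponent_le hN
          nlinarith
        have : N ^ (5 * g) * N ^ s * N ^ (5 * g) = N := by
          rw [← Real.rpow_add hN0, ← Real.rpow_add hN0]
          conv_rhs => rw [← Real.rpow_one N]
          congr 1; rw [hg]; ring
        calc 41 * M ^ 3 * N ^ (5 * g) * (K * N ^ s) * x
            ≤ 41 * M ^ 3 * N ^ (5 * g) * (K * N ^ s) * N ^ (5 * g) := by gcongr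
          _ = 41 * K * M ^ 3 * (N ^ (5 * g) * N ^ s * N ^ (5 * g)) := by ring
          _ = 41 * K * M ^ 3 * N := by rw [this]
          _ ≤ _ := by gcongr
  -- combine
  have tot : n * M ^ 3 ≤ K ^ (4 * J + 2 * j + 5) *
      (n * (20 * K ^ 3 * M ^ 3 / x) + 41 * K * M ^ 3 * n / x) := by
    calc n * M ^ 3 = ∑ i ∈ I, M ^ 3 := by rw [Finset.sum_const, nsmul_eq_mul, hIcard]
      _ ≤ ∑ i ∈ I, K ^ (4 * J + 2 * j + 5) *
          (20 * K ^ 3 * M ^ 3 / x + ((QQ.filter (r' i)).card : ℝ)) := by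
            refine Finset.sum_le_sum (fun i hi => (lower i hi).trans ?_)
            gcongr
            exact near i hi
      _ = K ^ (4 * J + 2 * j + 5) * (n * (20 * K ^ 3 * M ^ 3 / x) +
          ∑ i ∈ I, ((QQ.filter (r' i)).card : ℝ)) := by
            rw [← Finset.mul_sum, Finset.sum_add_distrib, Finset.sum_const, nsmul_eq_mul, hIcard]
      _ ≤ _ := by gcongr
  have hx0 : 0 < x := by linarith
  have tot2 : (n * M ^ 3) * x ≤ (n * M ^ 3) * (K ^ (4 * J + 2 * j + 5) * (20 * K ^ 3 + 41 * K)) := by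
    calc (n * M ^ 3) * x ≤ (K ^ (4 * J + 2 * j + 5) *
      (n * (20 * K ^ 3 * M ^ 3 / x) + 41 * K * M ^ 3 * n / x)) * x := by gcongr
      _ = _ := by field_simp
  have tot3 := le_of_mul_le_mul_left tot2 (by positivity)
  refine tot3.trans ?_
  calc K ^ (4 * J + 2 * j + 5) * (20 * K ^ 3 + 41 * K) ≤ K ^ (4 * J + 2 * j + 5) * K ^ 4 := by
        gcongr
        have : 100 * K ^ 3 ≤ K ^ 4 := by rw [pow_succ K 3, mul_comm]; gcongr
        have : K ≤ K ^ 3 := le_self_pow₀ hK1 (by norm_num)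
        nlinarith [pow_pos hK0 3]
    _ = _ := by ring

end DSP
end

section
open scoped Pointwise

namespace DSP
variable {A A' : Finset ℤ} {K N s : ℝ}

set_option maxHeartbeats 1000000 in
lemma stage_two (hN : 1 ≤ N) (hs0 : 0 < s) (hs1 : s < 1) (hA : A.Nonempty) (hK : 100 ≤ K)
    (hAA : ((A + A).card : ℝ) ≤ K * A.card) (hNC : NC A N s K)
    (hM : (A.card : ℝ) ≤ K * N ^ s) (hA0 : ∀ a ∈ A, 0 ≤ (a:ℝ) ∧ (a:ℝ) ≤ N)
    (hA' : A' ⊆ A) {J : ℕ} (hJ : (A.card : ℝ) ≤ K ^ J * A'.card)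
    {x0 k0 : ℤ} (hk1 : |(k0:ℝ)| ≤ N) (hk2 : N ≤ K ^ J * |(k0:ℝ)|)
    (hgood : ∀ a ∈ A', Good A K J (((a:ℝ) - x0) / k0))
    {g : ℝ} (hg : g = (1 - s) / 10) :
    N ^ (g * s) ≤ K ^ (12 * J + 62) := by
  have hK0 : 0 < K := by linarith
  have hK1 : 1 ≤ K := by linarith
  have hN0 : 0 < N := by linarith
  have hg0 : 0 < g := by rw [hg]; linarith
  have hg1 : g ≤ 1/10 := by rw [hg]; linarith
  have hMpos : (0:ℝ) < A.card := by exact_mod_cast hA.card_pos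
  have hKJ : 0 < K ^ J := by positivity
  have hk0 : 0 < |(k0:ℝ)| := by
    by_contra hc
    have : |(k0:ℝ)| = 0 := le_antisymm (not_lt.1 hc) (abs_nonneg _)
    rw [this] at hk2; linarith
  have hk0' : (k0:ℝ) ≠ 0 := abs_pos.1 hk0
  set U : ℝ := N ^ (1 - g) with hU
  set η : ℝ := N ^ (2 * g - 1) with hη
  have hU1 : 1 ≤ U := Real.one_le_rpow hN (by linarith)
  have hU0 : 0 < U := by linarith
  have hη0 : 0 < η := by positivity
  have hNU : N / U = N ^ g := by
    rw [hU, div_eq_iff (by positivity), ← Real.rpow_add hN0]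
    rw [show g + (1 - g) = 1 by ring, Real.rpow_one]
  have hηU : η * U = N ^ g := by
    rw [hU, hη, ← Real.rpow_add hN0]; congr 1; ring
  have hηN : η * N = N ^ (2 * g) := by
    rw [hη, ← Real.rpow_add_one hN0.ne']; congr 1; ring
  have hNg2 : N ^ g ≤ N ^ (2 * g) := Real.rpow_le_rpow_of_exponent_le hN (by linarith)
  have hA'r : ∀ a ∈ A', 0 ≤ (a:ℝ) ∧ (a:ℝ) ≤ N := fun a ha => hA0 a (hA' ha)
  -- differences
  have hdiff : ∀ a ∈ A', ∀ b ∈ A', |(a:ℝ) - b| ≤ N := by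
    intro a ha b hb
    have := hA'r a ha
    have := hA'r b hb
    rw [abs_le]; constructor <;> linarith
  have gdiff : ∀ a ∈ A', ∀ b ∈ A', Good A K (2 * J + 10) (((a:ℝ) - b) / k0) := by
    intro a ha b hb
    have := (hgood a ha).sub hA hK hAA (hgood b hb)
    have e : ((a:ℝ) - x0) / k0 - ((b:ℝ) - x0) / k0 = ((a:ℝ) - b) / k0 := by ring
    rw [e] at this
    exact this.mono hK1 (by omega)
  have ggsum : ∀ a ∈ A', ∀ b ∈ A', ∀ a2 ∈ A', ∀ b2 ∈ A',
      Good A K (4 * J + 26) ((((a:ℝ) - b) + ((a2:ℝ) - b2)) / k0) := by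
    intro a ha b hb a2 ha2 b2 hb2
    have := (gdiff a ha b hb).add hA hK hAA (gdiff a2 ha2 b2 hb2)
    rw [← add_div] at this
    exact this.mono hK1 (by omega)
  by_cases hpair : ∃ a3 ∈ A', ∃ a4 ∈ A', U ≤ |(a3:ℝ) - a4|
  swap
  · push Not at hpair
    have h1 := hNC A' hA' U hU1 (fun x hx y hy => (hpair x hx y hy).le)
    have hUN : (U / N) ^ s = (N ^ (g * s))⁻¹ := by
      rw [show U / N = (N / U)⁻¹ by rw [inv_div], hNU, Real.inv_rpow (by positivity),
        ← Real.rpow_mul hN0.le]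
    rw [hUN] at h1
    have hpos : 0 < N ^ (g * s) := by positivity
    have h2 : (A.card:ℝ) ≤ K ^ J * (K * (N ^ (g * s))⁻¹ * A.card) := hJ.trans (by gcongr)
    have h3 : (A.card:ℝ) * N ^ (g * s) ≤ A.card * K ^ (J + 1) := by
      calc (A.card:ℝ) * N ^ (g * s) ≤ (K ^ J * (K * (N ^ (g * s))⁻¹ * A.card)) * N ^ (g * s) := by
            gcongr
        _ = _ := by field_simp; ring
    have h4 := le_of_mul_le_mul_left h3 hMpos
    exact h4.trans (pow_le_pow_right₀ hK1 (by omega))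
  obtain ⟨p3, hp3, p4, hp4, hp34⟩ := hpair
  set Q : Set ℝ := {q | ∃ a1 ∈ A', ∃ a2 ∈ A', ∃ a3 ∈ A', ∃ a4 ∈ A', U ≤ |(a3:ℝ) - a4| ∧
    q = ((a1:ℝ) - a2) / ((a3:ℝ) - a4)} with hQ
  have h0Q : (0:ℝ) ∈ Q := ⟨p3, hp3, p3, hp3, p3, hp3, p4, hp4, hp34, by simp⟩
  have h1Q : (1:ℝ) ∈ Q := by
    refine ⟨p3, hp3, p4, hp4, p3, hp3, p4, hp4, hp34, ?_⟩
    rw [div_self]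
    intro h
    rw [h, abs_zero] at hp34; linarith
  by_cases hgap : ∃ q ∈ Q, 0 ≤ q ∧ q ≤ 1 ∧ ∃ e : ℝ, (e = 0 ∨ e = 1) ∧
      ∀ q' ∈ Q, η < |(q + e) / 2 - q'|
  · obtain ⟨q, ⟨a1, h1, a2, h2, a3, h3, a4, h4, hd, hq⟩, hq0, hq1, e, he, hfar⟩ := hgap
    set n : ℝ := (a1:ℝ) - a2 with hn
    set d : ℝ := (a3:ℝ) - a4 with hdd
    have hd0 : d ≠ 0 := by
      intro h
      rw [h, abs_zero] at hd; linarith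
    have hdp : 0 < |d| := abs_pos.2 hd0
    have hnq : n = q * d := by rw [hq]; field_simp
    have hnd : |n| ≤ |d| := by
      rw [hnq, abs_mul, abs_of_nonneg hq0]
      nlinarith
    have hdN : |d| ≤ N := hdiff a3 h3 a4 h4
    have g1 : Good A K (4 * J + 26) (2 * d / k0) := by
      have := ggsum a3 h3 a4 h4 a3 h3 a4 h4
      rw [← hdd, ← two_mul] at this
      exact this
    have g2 : Good A K (4 * J + 26) ((n + e * d) / k0) := by
      rcases he with rfl | rfl
      · have := gdiff a1 h1 a2 h2
        rw [← hn] at this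
        rw [zero_mul, add_zero]
        exact this.mono hK1 (by omega)
      · have := ggsum a1 h1 a2 h2 a3 h3 a4 h4
        rw [one_mul]; exact this
    have ded : |n + e * d| ≤ 2 * |d| := by
      rcases he with rfl | rfl
      · rw [zero_mul, add_zero]; linarith
      · rw [one_mul]
        exact (abs_add_le _ _).trans (by linarith)
    have cbound : ∀ z : ℝ, |z| ≤ 2 * |d| → |z / k0| * N ≤ 2 * |d| * K ^ J := by
      intro z hz
      rw [abs_div, div_mul_eq_mul_div, div_le_iff₀ hk0]
      calc |z| * N ≤ (2 * |d|) * (K ^ J * |(k0:ℝ)|) := by gcongr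
        _ = _ := by ring
    have main := gap_case (A' := A') hN hs0 hs1 hA hK hAA hNC hM hA0 hA' hJ (c1 := 2 * d / k0)
      (c2 := (n + e * d) / k0) (D := |d|) (U := U) (by linarith) hdN hU1 g1 g2
      (cbound _ (by rw [abs_mul]; simp)) (cbound _ ded) ?_ ?_
    · rw [hNU, ← Real.rpow_mul hN0.le] at main
      exact main.trans (pow_le_pow_right₀ hK1 (by omega))
    · intro a ha a' ha' b hb b' hb' heq
      by_contra hcon
      push Not at hcon
      have hcl := floor2_close heq
      have e1 : (2 * d / k0 * (a:ℝ) - 2 * d / k0 * (b:ℝ)) +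
          ((n + e * d) / k0 * (a':ℝ) - (n + e * d) / k0 * (b':ℝ)) =
          (2 * d * ((a:ℝ) - b) + (n + e * d) * ((a':ℝ) - b')) / k0 := by ring
      rw [e1, abs_div, div_lt_iff₀ hk0] at hcl
      have hab0 : (a':ℝ) - b' ≠ 0 := by
        intro h
        rw [h, abs_zero] at hcon; linarith
      have hq' : ((b:ℝ) - a) / ((a':ℝ) - b') ∈ Q := ⟨b, hb, a, ha, a', ha', b', hb', hcon.le, rfl⟩
      have hf := hfar _ hq'
      have e2 : 2 * d * ((a:ℝ) - b) + (n + e * d) * ((a':ℝ) - b') =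
          2 * d * ((a':ℝ) - b') * ((q + e) / 2 - ((b:ℝ) - a) / ((a':ℝ) - b')) := by
        rw [hnq]; field_simp; ring
      rw [e2, abs_mul, abs_mul, abs_mul, abs_two] at hcl
      have : 2 * U * U * η < 2 * N := by
        calc 2 * U * U * η ≤ 2 * |d| * |(a':ℝ) - b'| *
              |(q + e) / 2 - ((b:ℝ) - a) / ((a':ℝ) - b')| := by gcongr
          _ < 2 * |(k0:ℝ)| := hcl
          _ ≤ 2 * N := by linarith
      have h5 : U * N ^ g = N := by rw [← hNU]; field_simp
      have : 2 * U * U * η = 2 * N := by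
        rw [show 2 * U * U * η = 2 * (U * (η * U)) by ring, hηU, h5]
      linarith
    · intro a ha b hb a' ha' heq
      have hcl := floor2_close heq
      have e1 : (2 * d / k0 * (a:ℝ) - 2 * d / k0 * (b:ℝ)) +
          ((n + e * d) / k0 * (a':ℝ) - (n + e * d) / k0 * (a':ℝ)) =
          (2 * d * ((a:ℝ) - b)) / k0 := by ring
      rw [e1, abs_div, div_lt_iff₀ hk0, abs_mul, abs_mul, abs_two] at hcl
      rw [le_div_iff₀ hdp]
      nlinarith
  · push Not at hgap
    obtain ⟨k, hk⟩ := exists_pow_lt_of_lt_one hη0 (show (1/2:ℝ) < 1 by norm_num)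
    have hdense := dense_of_halving Q η hη0.le h0Q h1Q
      (fun q hq h0 h1 e he => hgap q hq h0 h1 e he) k
    have main := dense_case (A' := A') hN hs0 hs1 hA hK hAA hNC hM hA' hJ hg (j := 4 * J + 26) ?_
    · exact main.trans (pow_le_pow_right₀ hK1 (by omega))
    · intro y hy0 hy1
      obtain ⟨q, ⟨a1, h1, a2, h2, a3, h3, a4, h4, hd, hq⟩, hq0, hq1, hyq⟩ := hdense y hy0 hy1
      set n : ℝ := (a1:ℝ) - a2 with hn
      set d : ℝ := (a3:ℝ) - a4 with hdd
      have hd0 : d ≠ 0 := by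
        intro h
        rw [h, abs_zero] at hd; linarith
      have hdp : 0 < |d| := abs_pos.2 hd0
      have hnq : n = q * d := by rw [hq]; field_simp
      refine ⟨d / k0, n / k0, (gdiff a3 h3 a4 h4).mono hK1 (by omega),
        (gdiff a1 h1 a2 h2).mono hK1 (by omega), ?_⟩
      intro a ha a' ha' b hb b' hb' heq
      have hcl := floor2_close heq
      have e1 : (d / k0 * (a:ℝ) - d / k0 * (b:ℝ)) + (n / k0 * (a':ℝ) - n / k0 * (b':ℝ)) =
          d * (((a:ℝ) - b) + q * ((a':ℝ) - b')) / k0 := by rw [hnq]; ring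
      rw [e1, abs_div, div_lt_iff₀ hk0, abs_mul] at hcl
      have f1 : |((a:ℝ) - b) + q * ((a':ℝ) - b')| ≤ 2 * N ^ g := by
        rw [← hNU, ← mul_div_assoc, le_div_iff₀ hU0]
        have : |((a:ℝ) - b) + q * ((a':ℝ) - b')| * U ≤ |((a:ℝ) - b) + q * ((a':ℝ) - b')| * |d| := by
          gcongr
        linarith
      have f2 : |(y - q) * ((a':ℝ) - b')| ≤ 3 * (η * N) := by
        rw [abs_mul]
        have : |y - q| ≤ 3 * η := by linarith
        have := mul_le_mul this (hdiff a' ha' b' hb') (abs_nonneg _) (by positivity)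
        linarith
      rw [hηN] at f2
      have e3 : ((a:ℝ) - b) + y * ((a':ℝ) - b') =
        (((a:ℝ) - b) + q * ((a':ℝ) - b')) + (y - q) * ((a':ℝ) - b') := by ring
      rw [e3]
      refine (abs_add_le _ _).trans ?_
      linarith

end DSP
end

section
open scoped Pointwise

namespace DSP
variable {A : Finset ℤ} {K N s : ℝ}

lemma nc_small (hs0 : 0 < s) (i : ℕ) : ∃ q : ℕ, ∀ (A : Finset ℤ) (K N : ℝ), 100 ≤ K →
    K ^ q ≤ N → NC A N s K → ∀ S ⊆ A,
    (∀ x ∈ S, ∀ y ∈ S, |(x:ℝ) - y| ≤ 4 * (N / K ^ q)) → K ^ i * (S.card : ℝ) ≤ A.card := by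
  refine ⟨⌈(1 + i) / s⌉₊ + 1, ?_⟩
  intro A K N hK hN hNC S hS h
  set q := ⌈(1 + i) / s⌉₊ + 1 with hq
  have hK0 : 0 < K := by linarith
  have hKq : 0 < K ^ q := by positivity
  have hN0 : 0 < N := by linarith
  have h1 : 1 ≤ 4 * (N / K ^ q) := by
    have : 1 ≤ N / K ^ q := by rw [le_div_iff₀ hKq]; linarith
    linarith
  have h2 := hNC S hS _ h1 h
  have e1 : 4 * (N / K ^ q) / N = 4 / K ^ q := by field_simp
  rw [e1] at h2
  have h3 : (4 / K ^ q) ^ s ≤ ((K ^ (q - 1))⁻¹) ^ s := by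
    apply Real.rpow_le_rpow (by positivity) _ hs0.le
    rw [div_le_iff₀ hKq, hq, Nat.add_sub_cancel, pow_succ]
    have : 0 < K ^ ⌈(1 + (i:ℝ)) / s⌉₊ := by positivity
    field_simp
    linarith
  have h4 : ((K ^ (q - 1))⁻¹) ^ s ≤ (K ^ (1 + i))⁻¹ := by
    rw [Real.inv_rpow (by positivity)]
    apply inv_anti₀ (by positivity)
    rw [← Real.rpow_natCast K (1 + i), ← Real.rpow_natCast K (q - 1), ← Real.rpow_mul hK0.le]
    apply Real.rpow_le_rpow_of_exponent_le (by linarith)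
    rw [hq, Nat.add_sub_cancel]
    have := Nat.le_ceil ((1 + (i:ℝ)) / s)
    rw [div_le_iff₀ hs0] at this
    push_cast; linarith
  have h5 : (S.card:ℝ) ≤ K * (K ^ (1 + i))⁻¹ * A.card := by
    refine h2.trans ?_
    gcongr
    exact h3.trans h4
  calc K ^ i * (S.card : ℝ) ≤ K ^ i * (K * (K ^ (1 + i))⁻¹ * A.card) := by gcongr
    _ = A.card := by rw [pow_add]; field_simp

lemma lin_bad (u v : ℤ) (huv : u ≠ 0 ∨ v ≠ 0) (r κ : ℝ) (hκ : 0 < κ)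
    (hsm : ∀ S ⊆ A, (∀ x ∈ S, ∀ y ∈ S, |(x:ℝ) - y| ≤ 2 * r) → κ * (S.card : ℝ) ≤ A.card) :
    κ * (((A ×ˢ A).filter (fun p : ℤ × ℤ => |(u:ℝ) * p.1 + v * p.2| < r)).card : ℝ) ≤
      (A.card : ℝ) * A.card := by
  set I := (A ×ˢ A).filter (fun p : ℤ × ℤ => |(u:ℝ) * p.1 + v * p.2| < r) with hI
  have hmem : ∀ p ∈ I, p.1 ∈ A ∧ p.2 ∈ A ∧ |(u:ℝ) * p.1 + v * p.2| < r := by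
    intro p hp
    have := Finset.mem_filter.1 hp
    exact ⟨(Finset.mem_product.1 this.1).1, (Finset.mem_product.1 this.1).2, this.2⟩
  have key : ∀ w : ℤ, w ≠ 0 → ∀ x : ℝ, |x| ≤ |(w:ℝ) * x| := by
    intro w hw x
    rw [abs_mul]
    have : (1:ℝ) ≤ |(w:ℝ)| := by exact_mod_cast Int.one_le_abs hw
    nlinarith [abs_nonneg x]
  have fin : ∀ (f : ℤ × ℤ → ℤ), (∀ p ∈ I, f p ∈ A) → (∀ c, ((I.filter (fun i => f i = c)).card : ℝ)
      ≤ A.card / κ) → κ * (I.card:ℝ) ≤ (A.card : ℝ) * A.card := by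
    intro f hf hc
    have h1 := card_le_fib I f _ hc
    have h2 : ((I.image f).card : ℝ) ≤ A.card := by
      exact_mod_cast Finset.card_le_card (Finset.image_subset_iff.2 hf)
    calc κ * (I.card:ℝ) ≤ κ * (A.card / κ * (I.image f).card) := by gcongr
      _ ≤ κ * (A.card / κ * A.card) := by gcongr
      _ = _ := by field_simp
  rcases huv with h | h
  · refine fin Prod.snd (fun p hp => (hmem p hp).2.1) (fun c => ?_)
    rw [le_div_iff₀ hκ, mul_comm]
    have hinj : Set.InjOn (Prod.fst : ℤ × ℤ → ℤ) (I.filter (fun i => i.2 = c)) := by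
      intro p hp p' hp' hpp
      have a := (Finset.mem_filter.1 (Finset.mem_coe.1 hp)).2
      have b := (Finset.mem_filter.1 (Finset.mem_coe.1 hp')).2
      exact Prod.ext hpp (a.trans b.symm)
    rw [← Finset.card_image_of_injOn hinj]
    apply hsm
    · intro x hx
      obtain ⟨p, hp, rfl⟩ := Finset.mem_image.1 hx
      exact (hmem p (Finset.mem_filter.1 hp).1).1
    · intro x hx y hy
      obtain ⟨p, hp, rfl⟩ := Finset.mem_image.1 hx
      obtain ⟨p', hp', rfl⟩ := Finset.mem_image.1 hy
      obtain ⟨hp, hc⟩ := Finset.mem_filter.1 hp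
      obtain ⟨hp', hc'⟩ := Finset.mem_filter.1 hp'
      refine (key u h _).trans ?_
      have a := abs_lt.1 (hmem p hp).2.2
      have b := abs_lt.1 (hmem p' hp').2.2
      rw [hc] at a; rw [hc'] at b
      rw [abs_le]; constructor <;> linarith [a.1, a.2, b.1, b.2]
  · refine fin Prod.fst (fun p hp => (hmem p hp).1) (fun c => ?_)
    rw [le_div_iff₀ hκ, mul_comm]
    have hinj : Set.InjOn (Prod.snd : ℤ × ℤ → ℤ) (I.filter (fun i => i.1 = c)) := by
      intro p hp p' hp' hpp
      have a := (Finset.mem_filter.1 (Finset.mem_coe.1 hp)).2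
      have b := (Finset.mem_filter.1 (Finset.mem_coe.1 hp')).2
      exact Prod.ext (a.trans b.symm) hpp
    rw [← Finset.card_image_of_injOn hinj]
    apply hsm
    · intro x hx
      obtain ⟨p, hp, rfl⟩ := Finset.mem_image.1 hx
      exact (hmem p (Finset.mem_filter.1 hp).1).2.1
    · intro x hx y hy
      obtain ⟨p, hp, rfl⟩ := Finset.mem_image.1 hx
      obtain ⟨p', hp', rfl⟩ := Finset.mem_image.1 hy
      obtain ⟨hp, hc⟩ := Finset.mem_filter.1 hp
      obtain ⟨hp', hc'⟩ := Finset.mem_filter.1 hp'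
      refine (key v h _).trans ?_
      have a := abs_lt.1 (hmem p hp).2.2
      have b := abs_lt.1 (hmem p' hp').2.2
      rw [hc] at a; rw [hc'] at b
      rw [abs_le]; constructor <;> linarith [a.1, a.2, b.1, b.2]

lemma quad_fib (T : Finset ℤ) (u g r R : ℝ) (hr : 0 < r) (hR0 : 0 ≤ R)
    (hL : ∀ y ∈ T, r ≤ |u + 2 * g * y|)
    (hR : ∀ y ∈ T, ∀ y' ∈ T, |(u * y + g * (y:ℝ) ^ 2) - (u * y' + g * (y':ℝ) ^ 2)| ≤ R) :
    (T.card : ℝ) ≤ 4 * (R / r) + 2 := by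
  have hP : ((T.filter (fun y : ℤ => 0 ≤ u + 2 * g * y)).card : ℝ) ≤ 2 * (R / r) + 1 := by
    apply int_diam_card _ _ (by positivity)
    intro y hy y' hy'
    obtain ⟨hy, p⟩ := Finset.mem_filter.1 hy
    obtain ⟨hy', p'⟩ := Finset.mem_filter.1 hy'
    have a := hL y hy
    have b := hL y' hy'
    rw [abs_of_nonneg p] at a
    rw [abs_of_nonneg p'] at b
    have c := hR y hy y' hy'
    rw [show (u * y + g * (y:ℝ) ^ 2) - (u * y' + g * (y':ℝ) ^ 2) =
      ((y:ℝ) - y') * (((u + 2 * g * y) + (u + 2 * g * y')) / 2) by ring, abs_mul,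
      abs_of_nonneg (by linarith : 0 ≤ ((u + 2 * g * y) + (u + 2 * g * y')) / 2)] at c
    rw [le_div_iff₀ hr]
    refine le_trans ?_ c
    gcongr; linarith
  have hQ : ((T.filter (fun y : ℤ => ¬ 0 ≤ u + 2 * g * y)).card : ℝ) ≤ 2 * (R / r) + 1 := by
    apply int_diam_card _ _ (by positivity)
    intro y hy y' hy'
    obtain ⟨hy, p⟩ := Finset.mem_filter.1 hy
    obtain ⟨hy', p'⟩ := Finset.mem_filter.1 hy'
    have a := hL y hy
    have b := hL y' hy'
    rw [abs_of_neg (not_le.1 p)] at a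
    rw [abs_of_neg (not_le.1 p')] at b
    have c := hR y hy y' hy'
    rw [show (u * y + g * (y:ℝ) ^ 2) - (u * y' + g * (y':ℝ) ^ 2) =
      ((y:ℝ) - y') * (((u + 2 * g * y) + (u + 2 * g * y')) / 2) by ring, abs_mul,
      abs_of_neg (by linarith : ((u + 2 * g * y) + (u + 2 * g * y')) / 2 < 0)] at c
    rw [le_div_iff₀ hr]
    refine le_trans ?_ c
    gcongr; linarith
  have := Finset.card_filter_add_card_filter_not (s := T) (fun y : ℤ => 0 ≤ u + 2 * g * y)
  have h' : ((T.filter (fun y : ℤ => 0 ≤ u + 2 * g * y)).card : ℝ) +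
    ((T.filter (fun y : ℤ => ¬ 0 ≤ u + 2 * g * y)).card : ℝ) = T.card := by exact_mod_cast this
  linarith

lemma ell_lower {X Y l1 l2 h D b c ρ σ : ℝ} (hK : 100 ≤ K) (hN : 0 < N) (hρ : 0 < ρ) (hρ1 : ρ ≤ 1)
    (hσ : 0 < σ)
    (hX : 2 * ρ * N ≤ X) (hX' : X ≤ 2 * N) (hY : 2 * ρ * N ≤ Y) (hY' : Y ≤ 2 * N)
    (hid : 2 * c * l1 - b * l2 = D * h) (hD : 1 ≤ |D|) (hb : |b| ≤ K) (hc : |c| ≤ K)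
    (hh : σ * N ≤ |h|) (hsum : |X * l1 + Y * l2| ≤ 2 * K * N)
    (hbig : 6 * K ^ 2 ≤ ρ * σ * N) :
    ρ * σ / (6 * K) * N ≤ |l1| ∧ ρ * σ / (6 * K) * N ≤ |l2| := by
  have hK0 : 0 < K := by linarith
  have hm : σ * N ≤ 2 * K * |l1| + K * |l2| := by
    calc σ * N ≤ |h| := hh
      _ ≤ |D * h| := by rw [abs_mul]; nlinarith [abs_nonneg h]
      _ = |2 * c * l1 - b * l2| := by rw [hid]
      _ ≤ |2 * c * l1| + |b * l2| := abs_sub _ _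
      _ = 2 * |c| * |l1| + |b| * |l2| := by rw [abs_mul, abs_mul, abs_mul, abs_two]
      _ ≤ _ := by gcongr
  have aux : ∀ (X Y l1 l2 : ℝ), 2 * ρ * N ≤ X → Y ≤ 2 * N → 0 ≤ Y →
      |X * l1 + Y * l2| ≤ 2 * K * N → σ * N / (3 * K) ≤ |l1| → 
      ρ * σ / (6 * K) * N ≤ |l1| ∧ ρ * σ / (6 * K) * N ≤ |l2| := by
    intro X Y l1 l2 hX hY' hY0 hs hl
    have e : ρ * σ / (6 * K) * N = ρ * (σ * N / (3 * K)) / 2 := by field_simp; norm_num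
    have hpos : 0 < σ * N / (3 * K) := by positivity
    constructor
    · rw [e]; nlinarith
    · have h1 : |X * l1| ≤ |X * l1 + Y * l2| + |Y * l2| := by
        have := abs_sub (X * l1 + Y * l2) (Y * l2)
        rwa [add_sub_cancel_right] at this
      rw [abs_mul X, abs_mul Y, abs_of_nonneg (by nlinarith [mul_pos hρ hN] : 0 ≤ X),
        abs_of_nonneg hY0] at h1
      have h2 : 2 * ρ * N * |l1| ≤ 2 * N * K + 2 * N * |l2| := by
        have : 2 * ρ * N * |l1| ≤ X * |l1| := by gcongr
        have : Y * |l2| ≤ 2 * N * |l2| := by gcongr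
        nlinarith
      have h3 : ρ * |l1| ≤ K + |l2| := by
        have : 0 < 2 * N := by linarith
        refine le_of_mul_le_mul_left ?_ this
        linarith
      have h4 : ρ * (σ * N / (3 * K)) ≤ ρ * |l1| := by gcongr
      have h5 : 2 * K ≤ ρ * (σ * N / (3 * K)) := by
        rw [← mul_div_assoc, le_div_iff₀ (by positivity)]
        nlinarith
      rw [e]; linarith
  have hY0 : 0 ≤ Y := by nlinarith [mul_pos hρ hN]
  have hX0 : 0 ≤ X := by nlinarith [mul_pos hρ hN]
  by_cases hc1 : σ * N / (3 * K) ≤ |l1|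
  · exact aux X Y l1 l2 hX hY' hY0 hsum hc1
  · have : σ * N / (3 * K) ≤ |l2| := by
      push Not at hc1
      rw [lt_div_iff₀ (by positivity)] at hc1
      rw [div_le_iff₀ (by positivity)]
      nlinarith
    exact (aux Y X l2 l1 hY hX' hX0 (by rwa [add_comm]) this).symm

lemma good_of_pairs (hA : A.Nonempty) (hK : 100 ≤ K)
    (hAA : ((A + A).card : ℝ) ≤ K * A.card) {S : Finset ℤ} (hS : S ⊆ A) {a b r : ℕ} {c t R : ℝ}
    (ha : (A.card : ℝ) ≤ K ^ a * S.card) (hb : 1 ≤ K ^ b * |c|) (hR0 : 0 ≤ R) (hR : R ≤ K ^ r)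
    (h : ∀ x ∈ S, ∃ y ∈ A, |c * (x:ℝ) + (y:ℝ) - t| ≤ R) : Good A K (a + b + r + 7) c := by
  have hK0 : 0 < K := by linarith
  have hK1 : 1 ≤ K := by linarith
  have hc0 : 0 < |c| := by
    by_contra hc
    have : |c| = 0 := le_antisymm (not_lt.1 hc) (abs_nonneg _)
    rw [this] at hb; simp at hb; linarith
  have hMpos : (0:ℝ) < A.card := by exact_mod_cast hA.card_pos
  have hSne : S.Nonempty := by
    rw [Finset.nonempty_iff_ne_empty]
    rintro rfl
    simp at ha; exact (hA.ne_empty ha)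
  have hFS : (F S c).Nonempty := hSne.image _
  have h1 : (S.card : ℝ) ≤ K ^ (b + 1) * (F S c).card := by
    have := image_card_le S (fun x : ℤ => ⌊c * (x:ℝ)⌋) (fun x => x) (K ^ b) (by positivity) ?_
    · rw [Finset.image_id'] at this
      refine this.trans ?_
      rw [F, pow_succ]
      gcongr
      have : 1 ≤ K ^ b := one_le_pow₀ hK1
      nlinarith
    · intro x _ y _ hxy
      have := abs_lt.1 (Int.abs_sub_lt_one_of_floor_eq_floor hxy)
      have h2 : |c * ((x:ℝ) - y)| ≤ 1 := by
        rw [abs_le]; constructor <;> linarith [this.1, this.2]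
      rw [abs_mul] at h2
      have : |c| * |(x:ℝ) - y| ≤ |c| * K ^ b := by linarith
      exact le_of_mul_le_mul_left this hc0
  have h2 : ((F A c + F S c).card : ℝ) ≤ 5 * (A + A).card := by
    have := image_card_le (A ×ˢ S) (fun p : ℤ × ℤ => p.1 + p.2)
      (fun p : ℤ × ℤ => ⌊c * (p.1:ℝ)⌋ + ⌊c * (p.2:ℝ)⌋) 2 (by norm_num) ?_
    · have s1 : F A c + F S c ⊆
        (A ×ˢ S).image (fun p : ℤ × ℤ => ⌊c * (p.1:ℝ)⌋ + ⌊c * (p.2:ℝ)⌋) := by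
        intro v hv
        obtain ⟨x, hx, y, hy, rfl⟩ := Finset.mem_add.1 hv
        obtain ⟨p, hp, rfl⟩ := Finset.mem_image.1 hx
        obtain ⟨p', hp', rfl⟩ := Finset.mem_image.1 hy
        exact Finset.mem_image.2 ⟨(p, p'), Finset.mem_product.2 ⟨hp, hp'⟩, rfl⟩
      have s2 : (A ×ˢ S).image (fun p : ℤ × ℤ => p.1 + p.2) ⊆ A + A := by
        intro v hv
        obtain ⟨p, hp, rfl⟩ := Finset.mem_image.1 hv
        obtain ⟨hp1, hp2⟩ := Finset.mem_product.1 hp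
        exact Finset.add_mem_add hp1 (hS hp2)
      have s1' : ((F A c + F S c).card : ℝ) ≤ _ := Nat.cast_le.2 (Finset.card_le_card s1)
      have s2' : (((A ×ˢ S).image (fun p : ℤ × ℤ => p.1 + p.2)).card : ℝ) ≤ (A + A).card :=
        Nat.cast_le.2 (Finset.card_le_card s2)
      linarith
    · intro p _ p' _ hpp
      have hpp' : (p.1:ℝ) + p.2 = p'.1 + p'.2 := by exact_mod_cast hpp
      have e : c * (p.1:ℝ) + c * p.2 = c * p'.1 + c * p'.2 := by
        rw [← mul_add, hpp', mul_add]
      push_cast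
      have := Int.floor_le (c * (p.1:ℝ))
      have := Int.lt_floor_add_one (c * (p.1:ℝ))
      have := Int.floor_le (c * (p.2:ℝ))
      have := Int.lt_floor_add_one (c * (p.2:ℝ))
      have := Int.floor_le (c * (p'.1:ℝ))
      have := Int.lt_floor_add_one (c * (p'.1:ℝ))
      have := Int.floor_le (c * (p'.2:ℝ))
      have := Int.lt_floor_add_one (c * (p'.2:ℝ))
      rw [abs_le]; constructor <;> linarith
  have h3 : ((F A c + F S c).card : ℝ) ≤ K ^ (a + b + 3) * (F S c).card := by
    calc ((F A c + F S c).card : ℝ) ≤ 5 * (A + A).card := h2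
      _ ≤ 5 * (K * (K ^ a * (K ^ (b + 1) * (F S c).card))) := by
        have : (A.card:ℝ) ≤ K ^ a * (K ^ (b + 1) * (F S c).card) := ha.trans (by gcongr)
        have : K * (A.card:ℝ) ≤ K * (K ^ a * (K ^ (b + 1) * (F S c).card)) := by gcongr
        linarith
      _ ≤ K * (K * (K ^ a * (K ^ (b + 1) * (F S c).card))) := by gcongr; linarith
      _ = _ := by ring
  obtain ⟨X, -, hX, hX'⟩ := Finset.ruzsa_covering_add (K := K ^ (a + b + 3)) hFS h3
  set m : ℤ := ⌊2 * R + 1⌋ with hm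
  have hm0 : 0 ≤ m := Int.floor_nonneg.2 (by positivity)
  have hmR : (m:ℝ) ≤ 2 * R + 1 := Int.floor_le _
  have := good_of_cover (A := A) (z := a + b + r + 4) (w := 3) (e := c) hK1
    (X + Finset.Icc (-m) m) (A - A) ?_ ?_ (card_21 A hA K hAA)
  · exact this
  · intro v hv
    obtain ⟨x, hx, u, hu, rfl⟩ := Finset.mem_add.1 (hX' hv)
    obtain ⟨u1, hu1, u2, hu2, rfl⟩ := Finset.mem_sub.1 hu
    obtain ⟨p, hp, rfl⟩ := Finset.mem_image.1 hu1
    obtain ⟨p', hp', rfl⟩ := Finset.mem_image.1 hu2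
    obtain ⟨y, hy, h4⟩ := h p hp
    obtain ⟨y', hy', h5⟩ := h p' hp'
    refine Finset.mem_add.2 ⟨x + (⌊c * (p:ℝ)⌋ - ⌊c * (p':ℝ)⌋ + y - y'),
      Finset.add_mem_add hx ?_, y' - y, Finset.sub_mem_sub hy' hy, by ring⟩
    have a1 := Int.floor_le (c * (p:ℝ))
    have a2 := Int.lt_floor_add_one (c * (p:ℝ))
    have a3 := Int.floor_le (c * (p':ℝ))
    have a4 := Int.lt_floor_add_one (c * (p':ℝ))
    rw [abs_le] at h4 h5
    rw [Finset.mem_Icc]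
    constructor
    · rw [neg_le, hm, Int.le_floor]
      push_cast
      linarith [h4.1, h4.2, h5.1, h5.2]
    · rw [hm, Int.le_floor]
      push_cast
      linarith [h4.1, h4.2, h5.1, h5.2]
  · refine (card_add_le_real _ _).trans ?_
    have h6 : ((Finset.Icc (-m) m).card : ℝ) = 2 * m + 1 := by
      rw [Int.card_Icc]
      have : ((m + 1 - -m).toNat : ℤ) = 2 * m + 1 := by
        rw [Int.toNat_of_nonneg (by omega)]; ring
      exact_mod_cast this
    rw [h6]
    have h7 : 2 * (m:ℝ) + 1 ≤ K ^ (r + 1) := by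
      rw [pow_succ]
      have : 1 ≤ K ^ r := one_le_pow₀ hK1
      nlinarith
    calc (X.card:ℝ) * (2 * m + 1) ≤ K ^ (a + b + 3) * K ^ (r + 1) := by
          have : (0:ℝ) ≤ m := by exact_mod_cast hm0
          gcongr
      _ = _ := by ring

end DSP
end

section
open scoped Pointwise

namespace DSP
variable {A : Finset ℤ} {K N s : ℝ}

/-- the quadratic form -/
noncomputable def qf (α β γ : ℤ) (p : ℤ × ℤ) : ℝ :=
  α * (p.1:ℝ) ^ 2 + β * ((p.1:ℝ) * p.2) + γ * (p.2:ℝ) ^ 2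

abbrev Quad := (ℤ × ℤ) × (ℤ × ℤ)

set_option maxHeartbeats 4000000 in
lemma quads_exist {κ : Type} (α β γ : ℤ) (hdisc : β ^ 2 - 4 * α * γ ≠ 0) (f : ℤ × ℤ → κ)
    (hA : A.Nonempty) (hK : 100 ≤ K) (hN : 0 < N) (hA0 : ∀ a ∈ A, 0 ≤ (a:ℝ) ∧ (a:ℝ) ≤ N)
    (hf : (((A ×ˢ A).image f).card : ℝ) ≤ K * A.card)
    (hff : ∀ p ∈ A ×ˢ A, ∀ p' ∈ A ×ˢ A, f p = f p' → |qf α β γ p - qf α β γ p'| ≤ K * N)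
    {q q2 : ℕ}
    (hs1 : ∀ S ⊆ A, (∀ x ∈ S, ∀ y ∈ S, |(x:ℝ) - y| ≤ 2 * (N / K ^ q)) →
      K * (S.card : ℝ) ≤ A.card)
    (hs2 : ∀ S ⊆ A, (∀ x ∈ S, ∀ y ∈ S, |(x:ℝ) - y| ≤ 2 * (N / K ^ q2)) →
      K ^ (q + 4) * (S.card : ℝ) ≤ A.card) :
    ∃ Ω : Finset Quad, (A.card : ℝ) ^ 3 ≤ 8 * K * Ω.card ∧
      ∀ w ∈ Ω, w.1 ∈ A ×ˢ A ∧ w.2 ∈ A ×ˢ A ∧ |qf α β γ w.1 - qf α β γ w.2| ≤ K * N ∧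
        (N / K ^ q ≤ w.1.1 ∧ N / K ^ q ≤ w.1.2 ∧ N / K ^ q ≤ w.2.1 ∧ N / K ^ q ≤ w.2.2) ∧
        N / K ^ q2 ≤ |(w.1.1:ℝ) - w.2.1| ∧ N / K ^ q2 ≤ |(w.1.2:ℝ) - w.2.2| := by
  have hK0 : 0 < K := by linarith
  have hK1 : 1 ≤ K := by linarith
  have hMpos : (0:ℝ) < A.card := by exact_mod_cast hA.card_pos
  set M : ℝ := (A.card : ℝ) with hM
  set r1 := N / K ^ q with hr1
  set r2 := N / K ^ q2 with hr2
  have hr10 : 0 < r1 := by positivity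
  let bad (u v : ℤ) : Finset (ℤ × ℤ) :=
    (A ×ˢ A).filter (fun p : ℤ × ℤ => |(u:ℝ) * p.1 + v * p.2| < r1)
  have hbad : ∀ u v : ℤ, (u ≠ 0 ∨ v ≠ 0) → K * ((bad u v).card : ℝ) ≤ M * M := by
    intro u v huv
    exact lin_bad u v huv r1 K hK0 hs1
  set G := (A ×ˢ A).filter (fun p : ℤ × ℤ => r1 ≤ (p.1:ℝ) ∧ r1 ≤ (p.2:ℝ) ∧
    r1 ≤ |β * (p.1:ℝ) + 2 * γ * p.2| ∧ r1 ≤ |β * (p.2:ℝ) + 2 * α * p.1|) with hG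
  have hGm : ∀ p ∈ G, p ∈ A ×ˢ A ∧ (r1 ≤ (p.1:ℝ) ∧ r1 ≤ (p.2:ℝ) ∧
    r1 ≤ |β * (p.1:ℝ) + 2 * γ * p.2| ∧ r1 ≤ |β * (p.2:ℝ) + 2 * α * p.1|) :=
    fun p hp => Finset.mem_filter.1 hp
  -- G is large
  have hGbig : M ^ 2 ≤ 2 * (G.card : ℝ) := by
    have hsub : A ×ˢ A ⊆ G ∪ (bad 1 0 ∪ (bad 0 1 ∪ (bad β (2 * γ) ∪ bad (2 * α) β))) := by
      intro p hp
      simp only [Finset.mem_union]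
      by_contra hcon
      push Not at hcon
      obtain ⟨c0, c1, c2, c3, c4⟩ := hcon
      have hb : ∀ u v : ℤ, p ∉ bad u v → r1 ≤ |(u:ℝ) * p.1 + v * p.2| := by
        intro u v h
        by_contra hc
        exact h (Finset.mem_filter.2 ⟨hp, not_le.1 hc⟩)
      apply c0
      have d1 := hb _ _ c1
      have d2 := hb _ _ c2
      have d3 := hb _ _ c3
      have d4 := hb _ _ c4
      have p1 := (hA0 p.1 (Finset.mem_product.1 hp).1).1
      have p2 := (hA0 p.2 (Finset.mem_product.1 hp).2).1
      push_cast at d1 d2 d3 d4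
      rw [one_mul, zero_mul, add_zero, abs_of_nonneg p1] at d1
      rw [one_mul, zero_mul, zero_add, abs_of_nonneg p2] at d2
      rw [add_comm (2 * (α:ℝ) * p.1)] at d4
      exact Finset.mem_filter.2 ⟨hp, d1, d2, d3, d4⟩
    have hc := Finset.card_le_card hsub
    have hu := hc.trans ((Finset.card_union_le _ _).trans (Nat.add_le_add_left
      ((Finset.card_union_le _ _).trans (Nat.add_le_add_left ((Finset.card_union_le _ _).trans
        (Nat.add_le_add_left (Finset.card_union_le _ _) _)) _)) _))
    rw [Finset.card_product] at hu
    have hu' : M * M ≤ G.card + ((bad 1 0).card + ((bad 0 1).card + ((bad β (2 * γ)).card +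
      (bad (2 * α) β).card : ℝ))) := by rw [hM]; exact_mod_cast hu
    have b1 := hbad 1 0 (Or.inl one_ne_zero)
    have b2 := hbad 0 1 (Or.inr one_ne_zero)
    have b3 := hbad β (2 * γ) (by
      by_contra hc
      push Not at hc
      have : γ = 0 := by omega
      apply hdisc; rw [hc.1, this]; ring)
    have b4 := hbad (2 * α) β (by
      by_contra hc
      push Not at hc
      have : α = 0 := by omega
      apply hdisc; rw [hc.2, this]; ring)
    have : ∀ x : ℝ, 0 ≤ x → K * x ≤ M * M → 100 * x ≤ M * M := by
      intro x hx h
      nlinarith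
    have b1' := this _ (Nat.cast_nonneg _) b1
    have b2' := this _ (Nat.cast_nonneg _) b2
    have b3' := this _ (Nat.cast_nonneg _) b3
    have b4' := this _ (Nat.cast_nonneg _) b4
    nlinarith
  -- energy
  set Ω0 : Finset Quad := (G ×ˢ G).filter (fun w => f w.1 = f w.2) with hΩ0
  have hΩm : ∀ w ∈ Ω0, w.1 ∈ G ∧ w.2 ∈ G ∧ f w.1 = f w.2 := by
    intro w hw
    obtain ⟨h1, h2⟩ := Finset.mem_filter.1 hw
    exact ⟨(Finset.mem_product.1 h1).1, (Finset.mem_product.1 h1).2, h2⟩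
  have hE : M ^ 3 ≤ 4 * K * (Ω0.card : ℝ) := by
    have h1 := energy_lower G f
    have h2 : ((G.image f).card : ℝ) ≤ K * M := by
      refine le_trans ?_ hf
      exact_mod_cast Finset.card_le_card (Finset.image_subset_image (Finset.filter_subset _ _))
    have h3 : (G.card:ℝ) ^ 2 ≤ K * M * Ω0.card := h1.trans (by gcongr)
    have h4 : (M ^ 2) ^ 2 ≤ (2 * (G.card:ℝ)) ^ 2 := by gcongr
    have h5 : M * M ^ 3 ≤ M * (4 * K * (Ω0.card : ℝ)) := by nlinarith
    exact le_of_mul_le_mul_left h5 hMpos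
  have hcolor : ∀ w ∈ Ω0, ∀ w' ∈ Ω0, w.1 = w'.1 → |qf α β γ w.2 - qf α β γ w'.2| ≤ K * N := by
    intro w hw w' hw' he
    obtain ⟨a1, a2, a3⟩ := hΩm w hw
    obtain ⟨b1, b2, b3⟩ := hΩm w' hw'
    exact hff _ (hGm _ a2).1 _ (hGm _ b2).1 (by rw [← a3, ← b3, he])
  have hcolor' := hff
  have hnum : 4 * (K * N / r1) + 2 ≤ K ^ (q + 2) := by
    have : K * N / r1 = K ^ (q + 1) := by rw [hr1, pow_succ]; field_simp
    rw [this, pow_succ _ (q + 1)]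
    have : 1 ≤ K ^ (q + 1) := one_le_pow₀ hK1
    nlinarith
  have hclose : K ^ (q + 4) * (((A ×ˢ A).filter
      (fun p : ℤ × ℤ => |((1:ℤ):ℝ) * p.1 + ((-1:ℤ):ℝ) * p.2| < r2)).card : ℝ) ≤ M * M :=
    lin_bad 1 (-1) (Or.inl one_ne_zero) r2 (K ^ (q + 4)) (by positivity) hs2
  set CL := (A ×ˢ A).filter (fun p : ℤ × ℤ => |((1:ℤ):ℝ) * p.1 + ((-1:ℤ):ℝ) * p.2| < r2) with hCL
  have fin : ∀ (I : Finset Quad) (g : Quad → (ℤ × ℤ) × ℤ), (∀ w ∈ I, g w ∈ CL ×ˢ A) →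
      (∀ c, ((I.filter (fun i => g i = c)).card : ℝ) ≤ 4 * (K * N / r1) + 2) →
      16 * K * (I.card : ℝ) ≤ M ^ 3 := by
    intro I g hg hc
    have h1 := card_le_fib I g _ hc
    have h2 : ((I.image g).card : ℝ) ≤ CL.card * M := by
      have := Finset.card_le_card (Finset.image_subset_iff.2 hg)
      rw [Finset.card_product] at this
      rw [hM]; exact_mod_cast this
    have h3 : (I.card:ℝ) ≤ K ^ (q + 2) * (CL.card * M) := h1.trans (mul_le_mul hnum h2 (Nat.cast_nonneg _) (pow_nonneg hK0.le _))
    have h4 : K ^ 2 * (I.card : ℝ) ≤ M ^ 3 := by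
      calc K ^ 2 * (I.card : ℝ) ≤ K ^ 2 * (K ^ (q + 2) * (CL.card * M)) := by gcongr
        _ = (K ^ (q + 4) * CL.card) * M := by ring
        _ ≤ (M * M) * M := by gcongr
        _ = M ^ 3 := by ring
    refine le_trans ?_ h4
    gcongr
    nlinarith
  have hI1 := fin (Ω0.filter (fun w => |(w.1.1:ℝ) - w.2.1| < r2))
    (fun w => ((w.1.1, w.2.1), w.1.2)) ?_ ?_
  rotate_left
  · intro w hw
    obtain ⟨hw, hlt⟩ := Finset.mem_filter.1 hw
    obtain ⟨a1, a2, -⟩ := hΩm w hw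
    have a1 := Finset.mem_product.1 (hGm _ a1).1
    have a2 := Finset.mem_product.1 (hGm _ a2).1
    refine Finset.mem_product.2 ⟨Finset.mem_filter.2 ⟨Finset.mem_product.2 ⟨a1.1, a2.1⟩, ?_⟩, a1.2⟩
    push_cast
    rw [one_mul, neg_one_mul, ← sub_eq_add_neg]; exact hlt
  · intro c
    set W := (Ω0.filter (fun w => |(w.1.1:ℝ) - w.2.1| < r2)).filter
      (fun w : Quad => ((w.1.1, w.2.1), w.1.2) = c) with hW
    have hWm : ∀ w ∈ W, w ∈ Ω0 ∧ w.1.1 = c.1.1 ∧ w.2.1 = c.1.2 ∧ w.1.2 = c.2 := by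
      intro w hw
      obtain ⟨h1, h2⟩ := Finset.mem_filter.1 hw
      refine ⟨(Finset.mem_filter.1 h1).1, ?_⟩
      rw [← h2]; exact ⟨rfl, rfl, rfl⟩
    have hinj : Set.InjOn (fun w : Quad => w.2.2) W := by
      intro w hw w' hw' he
      obtain ⟨-, a1, a2, a3⟩ := hWm w hw
      obtain ⟨-, b1, b2, b3⟩ := hWm w' hw'
      exact Prod.ext (Prod.ext (a1.trans b1.symm) (a3.trans b3.symm))
        (Prod.ext (a2.trans b2.symm) he)
    rw [← Finset.card_image_of_injOn hinj]
    apply quad_fib _ (β * (c.1.2:ℝ)) γ r1 (K * N) hr10 (by positivity)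
    · intro y hy
      obtain ⟨w, hw, rfl⟩ := Finset.mem_image.1 hy
      obtain ⟨a0, a1, a2, a3⟩ := hWm w hw
      have := (hGm _ (hΩm w a0).2.1).2.2.2.1
      rw [a2] at this; exact this
    · intro y hy y' hy'
      obtain ⟨w, hw, rfl⟩ := Finset.mem_image.1 hy
      obtain ⟨w', hw', rfl⟩ := Finset.mem_image.1 hy'
      obtain ⟨a0, a1, a2, a3⟩ := hWm w hw
      obtain ⟨b0, b1, b2, b3⟩ := hWm w' hw'
      have := hcolor w a0 w' b0 (Prod.ext (a1.trans b1.symm) (a3.trans b3.symm))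
      unfold qf at this
      rw [a2, b2] at this
      convert this using 2
      ring
  have hI2 := fin (Ω0.filter (fun w => |(w.1.2:ℝ) - w.2.2| < r2))
    (fun w => ((w.1.2, w.2.2), w.1.1)) ?_ ?_
  rotate_left
  · intro w hw
    obtain ⟨hw, hlt⟩ := Finset.mem_filter.1 hw
    obtain ⟨a1, a2, -⟩ := hΩm w hw
    have a1 := Finset.mem_product.1 (hGm _ a1).1
    have a2 := Finset.mem_product.1 (hGm _ a2).1
    refine Finset.mem_product.2 ⟨Finset.mem_filter.2 ⟨Finset.mem_product.2 ⟨a1.2, a2.2⟩, ?_⟩, a1.1⟩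
    push_cast
    rw [one_mul, neg_one_mul, ← sub_eq_add_neg]; exact hlt
  · intro c
    set W := (Ω0.filter (fun w => |(w.1.2:ℝ) - w.2.2| < r2)).filter
      (fun w : Quad => ((w.1.2, w.2.2), w.1.1) = c) with hW
    have hWm : ∀ w ∈ W, w ∈ Ω0 ∧ w.1.2 = c.1.1 ∧ w.2.2 = c.1.2 ∧ w.1.1 = c.2 := by
      intro w hw
      obtain ⟨h1, h2⟩ := Finset.mem_filter.1 hw
      refine ⟨(Finset.mem_filter.1 h1).1, ?_⟩
      rw [← h2]; exact ⟨rfl, rfl, rfl⟩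
    have hinj : Set.InjOn (fun w : Quad => w.2.1) W := by
      intro w hw w' hw' he
      obtain ⟨-, a1, a2, a3⟩ := hWm w hw
      obtain ⟨-, b1, b2, b3⟩ := hWm w' hw'
      exact Prod.ext (Prod.ext (a3.trans b3.symm) (a1.trans b1.symm))
        (Prod.ext he (a2.trans b2.symm))
    rw [← Finset.card_image_of_injOn hinj]
    apply quad_fib _ (β * (c.1.2:ℝ)) α r1 (K * N) hr10 (by positivity)
    · intro y hy
      obtain ⟨w, hw, rfl⟩ := Finset.mem_image.1 hy
      obtain ⟨a0, a1, a2, a3⟩ := hWm w hw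
      have := (hGm _ (hΩm w a0).2.1).2.2.2.2
      rw [a2] at this; exact this
    · intro y hy y' hy'
      obtain ⟨w, hw, rfl⟩ := Finset.mem_image.1 hy
      obtain ⟨w', hw', rfl⟩ := Finset.mem_image.1 hy'
      obtain ⟨a0, a1, a2, a3⟩ := hWm w hw
      obtain ⟨b0, b1, b2, b3⟩ := hWm w' hw'
      have := hcolor w a0 w' b0 (Prod.ext (a3.trans b3.symm) (a1.trans b1.symm))
      unfold qf at this
      rw [a2, b2] at this
      convert this using 2
      ring
  set I1 := Ω0.filter (fun w => |(w.1.1:ℝ) - w.2.1| < r2) with hI1d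
  set I2 := Ω0.filter (fun w => |(w.1.2:ℝ) - w.2.2| < r2) with hI2d
  set Ω := Ω0.filter (fun w => r2 ≤ |(w.1.1:ℝ) - w.2.1| ∧ r2 ≤ |(w.1.2:ℝ) - w.2.2|) with hΩ
  have hsub : Ω0 ⊆ Ω ∪ (I1 ∪ I2) := by
    intro w hw
    simp only [Finset.mem_union]
    by_contra hcon
    push Not at hcon
    obtain ⟨c0, c1, c2⟩ := hcon
    apply c0
    refine Finset.mem_filter.2 ⟨hw, ?_, ?_⟩
    · by_contra hc
      exact c1 (Finset.mem_filter.2 ⟨hw, not_le.1 hc⟩)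
    · by_contra hc
      exact c2 (Finset.mem_filter.2 ⟨hw, not_le.1 hc⟩)
  have hcard : (Ω0.card : ℝ) ≤ Ω.card + (I1.card + I2.card) := by
    exact_mod_cast (Finset.card_le_card hsub).trans ((Finset.card_union_le _ _).trans
      (Nat.add_le_add_left (Finset.card_union_le _ _) _))
  refine ⟨Ω, ?_, ?_⟩
  · have : K * (Ω0.card : ℝ) ≤ K * (Ω.card + (I1.card + I2.card)) := by gcongr
    nlinarith
  · intro w hw
    obtain ⟨hw, h1, h2⟩ := Finset.mem_filter.1 hw
    obtain ⟨a1, a2, a3⟩ := hΩm w hw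
    have g1 := hGm _ a1
    have g2 := hGm _ a2
    exact ⟨g1.1, g2.1, hff _ g1.1 _ g2.1 a3, ⟨g1.2.1, g1.2.2.1, g2.2.1, g2.2.2.1⟩, h1, h2⟩

end DSP
end

section
open scoped Pointwise

namespace DSP
variable {A : Finset ℤ} {K N s : ℝ}

lemma chain_aux {M w i t : ℝ} {n e : ℕ} (hK : 0 < K) (ht : 0 ≤ t) (htK : t ≤ K) (hi : 0 ≤ i)
    (h1 : M ≤ t * K ^ n * w) (h2 : w ≤ K ^ e * i) : M ≤ K ^ (e + (n + 1)) * i := by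
  calc M ≤ t * K ^ n * w := h1
    _ ≤ t * K ^ n * (K ^ e * i) := by gcongr
    _ ≤ K * K ^ n * (K ^ e * i) := by gcongr
    _ = _ := by ring

lemma good_ratio (hA : A.Nonempty) (hK : 100 ≤ K)
    (hAA : ((A + A).card : ℝ) ≤ K * A.card) (α β γ : ℤ) (hdisc : β ^ 2 - 4 * α * γ ≠ 0)
    (hα : |(α:ℝ)| ≤ K) (hβ : |(β:ℝ)| ≤ K) (hγ : |(γ:ℝ)| ≤ K) {h k l1 l2 : ℝ} {j b1 b2 : ℕ}
    (hl1 : l1 = 2 * α * h + β * k) (hl2 : l2 = β * h + 2 * γ * k) (hk : k ≠ 0) (hl : 0 < |l2|)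
    (hb1 : |l2| ≤ K ^ b1 * |k|) (hb2 : |h| ≤ K ^ b2 * |l2|) (hc : Good A K j (l1 / l2)) :
    Good A K (2 * ((7 * β.natAbs + 4) + (2 * (7 * (2 * γ).natAbs + 4) + j + 2 + 6) + 10) +
      (((2 * (7 * β.natAbs + 4) + j + 1 + 6) + (7 * (2 * α).natAbs + 4) + 10) + b1 + 1)
      + (b2 + 3) + 6) (h / k) := by
  have hK0 : 0 < K := by linarith
  have hK1 : 1 ≤ K := by linarith
  have hl0 : l2 ≠ 0 := abs_pos.1 hl
  have hD : (1:ℝ) ≤ |(β:ℝ) ^ 2 - 4 * α * γ| := by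
    have := Int.one_le_abs hdisc
    have h2 : ((1:ℤ):ℝ) ≤ ((|β ^ 2 - 4 * α * γ| : ℤ) : ℝ) := by exact_mod_cast this
    push_cast at h2; exact h2
  have hD0 : (β:ℝ) ^ 2 - 4 * α * γ ≠ 0 := by
    intro h; rw [h, abs_zero] at hD; linarith
  set D : ℝ := (β:ℝ) ^ 2 - 4 * α * γ with hDd
  have hDu : |D| ≤ K ^ 3 := by
    calc |D| ≤ |(β:ℝ) ^ 2| + |4 * (α:ℝ) * γ| := abs_sub _ _
      _ = |(β:ℝ)| ^ 2 + 4 * |(α:ℝ)| * |(γ:ℝ)| := by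
          rw [abs_pow, abs_mul, abs_mul, abs_of_pos (by norm_num : (0:ℝ) < 4)]
      _ ≤ K ^ 2 + 4 * K * K := by gcongr
      _ ≤ K ^ 3 := by nlinarith [sq_nonneg K]
  have gb := good_int hA hK hAA β
  have ga := good_int hA hK hAA (2 * α)
  have gc := good_int hA hK hAA (2 * γ)
  have gv := (Good.mul hA hK hAA (b := 1) (by rw [pow_one]; exact hβ) gb hc).sub hA hK hAA ga
  have gw := gb.sub hA hK hAA (Good.mul hA hK hAA (b := 2) (by
    push_cast
    rw [abs_mul, abs_two]; nlinarith) gc hc)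
  have ev : (β:ℝ) * (l1 / l2) - ((2 * α : ℤ) : ℝ) = D * k / l2 := by
    push_cast
    field_simp
    rw [hl1, hl2, hDd]; ring
  have ew : (β:ℝ) - ((2 * γ : ℤ) : ℝ) * (l1 / l2) = D * h / l2 := by
    push_cast
    field_simp
    rw [hl1, hl2, hDd]; ring
  rw [ev] at gv
  rw [ew] at gw
  have gi := Good.inv hK (b := b1) (by
    rw [abs_div, abs_mul, ← mul_div_assoc, le_div_iff₀ hl, one_mul]
    refine hb1.trans ?_
    gcongr
    nlinarith [abs_nonneg k]) gv
  have gf := Good.mul hA hK hAA (b := b2 + 3) (by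
    rw [abs_div, abs_mul, div_le_iff₀ hl, pow_add]
    calc |D| * |h| ≤ K ^ 3 * (K ^ b2 * |l2|) := by gcongr
      _ = _ := by ring) gw gi
  have : D * h / l2 * (1 / (D * k / l2)) = h / k := by field_simp
  rw [this] at gf
  exact gf

set_option maxHeartbeats 4000000 in
lemma quads_use (hA : A.Nonempty) (hK : 100 ≤ K) (hN : 0 < N)
    (hAA : ((A + A).card : ℝ) ≤ K * A.card) (hA0 : ∀ a ∈ A, 0 ≤ (a:ℝ) ∧ (a:ℝ) ≤ N)
    (α β γ : ℤ) (hdisc : β ^ 2 - 4 * α * γ ≠ 0)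
    (hα : |(α:ℝ)| ≤ K) (hβ : |(β:ℝ)| ≤ K) (hγ : |(γ:ℝ)| ≤ K) {q q2 q3 : ℕ} (hq3 : q3 = q + q2 + 2)
    (hNbig : K ^ (q + q2 + 3) ≤ N)
    (Ω : Finset Quad) (hΩ : (A.card : ℝ) ^ 3 ≤ 8 * K * Ω.card)
    (hΩm : ∀ w ∈ Ω, w.1 ∈ A ×ˢ A ∧ w.2 ∈ A ×ˢ A ∧ |qf α β γ w.1 - qf α β γ w.2| ≤ K * N ∧
        (N / K ^ q ≤ w.1.1 ∧ N / K ^ q ≤ w.1.2 ∧ N / K ^ q ≤ w.2.1 ∧ N / K ^ q ≤ w.2.2) ∧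
        N / K ^ q2 ≤ |(w.1.1:ℝ) - w.2.1| ∧ N / K ^ q2 ≤ |(w.1.2:ℝ) - w.2.2|) :
    ∃ A' ⊆ A, ∃ x0 k0 : ℤ, (A.card : ℝ) ≤ K ^ (q3 + 6) * A'.card ∧ |(k0:ℝ)| ≤ N ∧
      N ≤ K ^ q2 * |(k0:ℝ)| ∧ ∀ a ∈ A', Good A K
      (2 * ((7 * β.natAbs + 4) + (2 * (7 * (2 * γ).natAbs + 4) + (3 * q3 + 18) + 2 + 6) + 10) +
      (((2 * (7 * β.natAbs + 4) + (3 * q3 + 18) + 1 + 6) + (7 * (2 * α).natAbs + 4) + 10)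
      + (q2 + 2) + 1) + (q3 + 3) + 6) (((a:ℝ) - x0) / k0) := by
  have hK0 : 0 < K := by linarith
  have hK1 : 1 ≤ K := by linarith
  have hMpos : (0:ℝ) < A.card := by exact_mod_cast hA.card_pos
  set M : ℝ := (A.card : ℝ) with hM
  let L1 : ℤ × ℤ → ℝ := fun d => 2 * α * (d.1:ℝ) + β * (d.2:ℝ)
  let L2 : ℤ × ℤ → ℝ := fun d => β * (d.1:ℝ) + 2 * γ * (d.2:ℝ)
  have hD : (1:ℝ) ≤ |-((β:ℝ) ^ 2 - 4 * α * γ)| := by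
    have := Int.one_le_abs hdisc
    have h2 : ((1:ℤ):ℝ) ≤ ((|β ^ 2 - 4 * α * γ| : ℤ) : ℝ) := by exact_mod_cast this
    push_cast at h2; rw [abs_neg]; exact h2
  have hdN : ∀ w ∈ Ω, |(w.1.1:ℝ) - w.2.1| ≤ N ∧ |(w.1.2:ℝ) - w.2.2| ≤ N := by
    intro w hw
    obtain ⟨a, b, -⟩ := hΩm w hw
    have a1 := hA0 _ (Finset.mem_product.1 a).1
    have a2 := hA0 _ (Finset.mem_product.1 a).2
    have b1 := hA0 _ (Finset.mem_product.1 b).1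
    have b2 := hA0 _ (Finset.mem_product.1 b).2
    constructor <;> rw [abs_le] <;> constructor <;> linarith [a1.1, a1.2, a2.1, a2.2, b1.1, b1.2,
      b2.1, b2.2]
  have hsum : ∀ w ∈ Ω, |((w.1.1:ℝ) + w.2.1) * L1 (w.1 - w.2) + ((w.1.2:ℝ) + w.2.2) * L2 (w.1 - w.2)|
      ≤ 2 * K * N := by
    intro w hw
    have h1 := (hΩm w hw).2.2.1
    have : ((w.1.1:ℝ) + w.2.1) * L1 (w.1 - w.2) + ((w.1.2:ℝ) + w.2.2) * L2 (w.1 - w.2) =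
        2 * (qf α β γ w.1 - qf α β γ w.2) := by
      simp only [L1, L2, qf, Prod.fst_sub, Prod.snd_sub]
      push_cast; ring
    rw [this, abs_mul, abs_two]; linarith
  have hLlow : ∀ w ∈ Ω, N / K ^ q3 ≤ |L1 (w.1 - w.2)| ∧ N / K ^ q3 ≤ |L2 (w.1 - w.2)| := by
    intro w hw
    obtain ⟨a, b, -, ⟨c1, c2, c3, c4⟩, d1, d2⟩ := hΩm w hw
    have a1 := hA0 _ (Finset.mem_product.1 a).1
    have a2 := hA0 _ (Finset.mem_product.1 a).2
    have b1 := hA0 _ (Finset.mem_product.1 b).1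
    have b2 := hA0 _ (Finset.mem_product.1 b).2
    have e1 : N / K ^ q = 1 / K ^ q * N := by ring
    have e2 : N / K ^ q2 = 1 / K ^ q2 * N := by ring
    rw [e1] at c1 c2 c3 c4
    rw [e2] at d1
    have key := ell_lower (K := K) (N := N) (X := (w.1.1:ℝ) + w.2.1) (Y := (w.1.2:ℝ) + w.2.2)
      (l1 := L1 (w.1 - w.2)) (l2 := L2 (w.1 - w.2)) (h := (w.1.1:ℝ) - w.2.1)
      (D := -((β:ℝ) ^ 2 - 4 * α * γ)) (b := β) (c := γ) (ρ := 1 / K ^ q) (σ := 1 / K ^ q2)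
      hK hN (by positivity) (by
        rw [div_le_one (by positivity)]; exact one_le_pow₀ hK1) (by positivity)
      (by linarith) (by linarith [a1.2, b1.2]) (by linarith) (by linarith [a2.2, b2.2])
      (by simp only [L1, L2, Prod.fst_sub, Prod.snd_sub]; push_cast; ring) hD hβ hγ d1 (hsum w hw) (by
        rw [pow_add, pow_add] at hNbig
        have : 1 / K ^ q * (1 / K ^ q2) * N = N / (K ^ q * K ^ q2) := by field_simp
        rw [this, le_div_iff₀ (by positivity)]
        refine le_trans ?_ hNbig
        rw [mul_comm]
        gcongr
        nlinarith [sq_nonneg K])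
    have hle : N / K ^ q3 ≤ 1 / K ^ q * (1 / K ^ q2) / (6 * K) * N := by
      have : 1 / K ^ q * (1 / K ^ q2) / (6 * K) * N = N / (K ^ q * K ^ q2 * (6 * K)) := by field_simp
      rw [this, hq3, pow_add, pow_add]
      gcongr
      nlinarith
    exact ⟨hle.trans key.1, hle.trans key.2⟩
  have hLup : ∀ w ∈ Ω, |L1 (w.1 - w.2)| ≤ K ^ 2 * N ∧ |L2 (w.1 - w.2)| ≤ K ^ 2 * N := by
    intro w hw
    obtain ⟨h1, h2⟩ := hdN w hw
    simp only [L1, L2, Prod.fst_sub, Prod.snd_sub]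
    push_cast
    constructor
    · refine (abs_add_le _ _).trans ?_
      rw [abs_mul, abs_mul, abs_mul, abs_two]
      calc 2 * |(α:ℝ)| * |(w.1.1:ℝ) - w.2.1| + |(β:ℝ)| * |(w.1.2:ℝ) - w.2.2| ≤ 2 * K * N + K * N := by
            gcongr
        _ ≤ K ^ 2 * N := by nlinarith [mul_pos hK0 hN]
    · refine (abs_add_le _ _).trans ?_
      rw [abs_mul, abs_mul, abs_mul, abs_two]
      calc |(β:ℝ)| * |(w.1.1:ℝ) - w.2.1| + 2 * |(γ:ℝ)| * |(w.1.2:ℝ) - w.2.2| ≤ K * N + 2 * K * N := by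
            gcongr
        _ ≤ K ^ 2 * N := by nlinarith [mul_pos hK0 hN]
  -- fibre bound
  have hfib : ∀ (T : Finset Quad) (d : ℤ × ℤ) (x : ℤ), T ⊆ Ω → (∀ w ∈ T, w.1 - w.2 = d) →
      (∀ w ∈ T, w.2.1 = x) → (T.card : ℝ) ≤ K ^ (q3 + 2) := by
    intro T d x hT hd hx
    have hinj : Set.InjOn (fun w : Quad => w.2.2) T := by
      intro w hw w' hw' he
      have e2 : w.2 = w'.2 := Prod.ext ((hx w hw).trans (hx w' hw').symm) he
      have e1 : w.1 = w'.1 := by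
        have := (hd w hw).trans (hd w' hw').symm
        rw [e2] at this
        exact sub_left_injective this
      exact Prod.ext e1 e2
    rw [← Finset.card_image_of_injOn hinj]
    have := int_diam_card (T.image (fun w : Quad => w.2.2)) (2 * K ^ (q3 + 1)) (by positivity) ?_
    · refine this.trans ?_
      rw [pow_succ _ (q3 + 1)]
      have : 1 ≤ K ^ (q3 + 1) := one_le_pow₀ hK1
      nlinarith
    · intro y hy y' hy'
      obtain ⟨w, hw, rfl⟩ := Finset.mem_image.1 hy
      obtain ⟨w', hw', rfl⟩ := Finset.mem_image.1 hy'
      have s1 := abs_le.1 (hsum w (hT hw))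
      have s2 := abs_le.1 (hsum w' (hT hw'))
      have l2 := (hLlow w (hT hw)).2
      have d1 := hd w hw
      have d2 := hd w' hw'
      have x1 := hx w hw
      have x2 := hx w' hw'
      have f1 : w.1.1 = d.1 + x := by rw [← d1, ← x1]; simp
      have f2 : w'.1.1 = d.1 + x := by rw [← d2, ← x2]; simp
      have g1 : w.1.2 = d.2 + w.2.2 := by rw [← d1]; simp
      have g2 : w'.1.2 = d.2 + w'.2.2 := by rw [← d2]; simp
      rw [d1, f1, g1, x1] at s1
      rw [d2, f2, g2, x2] at s2
      rw [d1] at l2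
      push_cast at s1 s2
      have h3 : |2 * ((w.2.2:ℝ) - w'.2.2) * L2 d| ≤ 4 * K * N := by
        rw [abs_le]
        constructor <;> linarith [s1.1, s1.2, s2.1, s2.2]
      rw [abs_mul, abs_mul, abs_two] at h3
      have h4 : 2 * |(w.2.2:ℝ) - w'.2.2| * (N / K ^ q3) ≤ 4 * K * N := le_trans (by gcongr) h3
      rw [← mul_div_assoc, div_le_iff₀ (by positivity)] at h4
      have h5 : |(w.2.2:ℝ) - w'.2.2| * N ≤ (2 * K ^ (q3 + 1)) * N := by
        rw [pow_succ]; nlinarith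
      exact le_of_mul_le_mul_right h5 hN
  -- popularity
  let pop : ℤ × ℤ → Prop := fun d =>
    M ≤ 16 * K ^ 5 * ((Ω.filter (fun w : Quad => w.1 - w.2 = d)).card : ℝ)
  have hAmA := card_sub_AA A hA K hAA
  rw [← hM] at hAmA
  have hunpop : 16 * K * ((Ω.filter (fun w : Quad => ¬ pop (w.1 - w.2))).card : ℝ) ≤ M ^ 3 := by
    set Ωu := Ω.filter (fun w : Quad => ¬ pop (w.1 - w.2)) with hΩu
    have h1 := card_le_fib Ωu (fun w : Quad => w.1 - w.2) (M / (16 * K ^ 5)) ?_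
    · have h2 : ((Ωu.image (fun w : Quad => w.1 - w.2)).card : ℝ) ≤ (K ^ 2 * M) * (K ^ 2 * M) := by
        have hsub : Ωu.image (fun w : Quad => w.1 - w.2) ⊆ (A - A) ×ˢ (A - A) := by
          intro d hd
          obtain ⟨w, hw, rfl⟩ := Finset.mem_image.1 hd
          obtain ⟨a, b, -⟩ := hΩm w (Finset.mem_filter.1 hw).1
          have a := Finset.mem_product.1 a
          have b := Finset.mem_product.1 b
          exact Finset.mem_product.2 ⟨Finset.sub_mem_sub a.1 b.1, Finset.sub_mem_sub a.2 b.2⟩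
        have := Finset.card_le_card hsub
        rw [Finset.card_product] at this
        have : ((Ωu.image (fun w : Quad => w.1 - w.2)).card : ℝ) ≤ (A - A).card * (A - A).card := by
          exact_mod_cast this
        exact this.trans (mul_le_mul hAmA hAmA (Nat.cast_nonneg _) (by positivity))
      have h3 : (Ωu.card:ℝ) ≤ M / (16 * K ^ 5) * ((K ^ 2 * M) * (K ^ 2 * M)) :=
        h1.trans (mul_le_mul_of_nonneg_left h2 (by positivity))
      have h4 : 16 * K * (Ωu.card:ℝ) ≤ 16 * K * (M / (16 * K ^ 5) * ((K ^ 2 * M) * (K ^ 2 * M))) :=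
        mul_le_mul_of_nonneg_left h3 (by positivity)
      refine h4.trans (le_of_eq ?_)
      field_simp
    · intro c
      by_cases hne : (Ωu.filter (fun w : Quad => w.1 - w.2 = c)).Nonempty
      · obtain ⟨w, hw⟩ := hne
        obtain ⟨hw, hc⟩ := Finset.mem_filter.1 hw
        have hnp := (Finset.mem_filter.1 hw).2
        rw [hc] at hnp
        simp only [pop, not_le] at hnp
        rw [le_div_iff₀ (by positivity), mul_comm]
        refine le_trans ?_ hnp.le
        gcongr
        exact Finset.filter_subset _ _
      · rw [Finset.not_nonempty_iff_eq_empty.1 hne]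
        simp; positivity
  set Ωp := Ω.filter (fun w : Quad => pop (w.1 - w.2)) with hΩp
  have hpopc : M ^ 3 ≤ 16 * K * (Ωp.card : ℝ) := by
    have := Finset.card_filter_add_card_filter_not (s := Ω) (fun w : Quad => pop (w.1 - w.2))
    have h' : (Ωp.card : ℝ) + ((Ω.filter (fun w : Quad => ¬ pop (w.1 - w.2))).card : ℝ) = Ω.card := by
      exact_mod_cast this
    rw [← h'] at hΩ
    linarith
  -- pigeonhole
  obtain ⟨c, hc⟩ : ∃ c : ℤ × ℤ, M ≤ 32 * K ^ 3 *
      ((Ωp.filter (fun w : Quad => (w.1.2 - w.2.2, w.2.1) = c)).card : ℝ) := by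
    by_contra hcon
    push Not at hcon
    have h1 := card_le_fib Ωp (fun w : Quad => (w.1.2 - w.2.2, w.2.1)) (M / (32 * K ^ 3)) ?_
    · have h2 : ((Ωp.image (fun w : Quad => (w.1.2 - w.2.2, w.2.1))).card : ℝ) ≤ (K ^ 2 * M) * M := by
        have hsub : Ωp.image (fun w : Quad => (w.1.2 - w.2.2, w.2.1)) ⊆ (A - A) ×ˢ A := by
          intro d hd
          obtain ⟨w, hw, rfl⟩ := Finset.mem_image.1 hd
          obtain ⟨a, b, -⟩ := hΩm w (Finset.mem_filter.1 hw).1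
          have a := Finset.mem_product.1 a
          have b := Finset.mem_product.1 b
          exact Finset.mem_product.2 ⟨Finset.sub_mem_sub a.2 b.2, b.1⟩
        have := Finset.card_le_card hsub
        rw [Finset.card_product] at this
        have : ((Ωp.image (fun w : Quad => (w.1.2 - w.2.2, w.2.1))).card : ℝ) ≤
            (A - A).card * A.card := by
          exact_mod_cast this
        exact this.trans (mul_le_mul hAmA le_rfl (Nat.cast_nonneg _) (by positivity))
      have h3 : (Ωp.card:ℝ) ≤ M / (32 * K ^ 3) * ((K ^ 2 * M) * M) :=
        h1.trans (mul_le_mul_of_nonneg_left h2 (by positivity))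
      have h4 : 16 * K * (Ωp.card:ℝ) ≤ 16 * K * (M / (32 * K ^ 3) * ((K ^ 2 * M) * M)) :=
        mul_le_mul_of_nonneg_left h3 (by positivity)
      have h5 : 16 * K * (M / (32 * K ^ 3) * ((K ^ 2 * M) * M)) = M ^ 3 / 2 := by
        field_simp; norm_num
      have : 0 < M ^ 3 := by positivity
      linarith
    · intro c
      rw [le_div_iff₀ (by positivity), mul_comm]
      exact (hcon c).le
  obtain ⟨k0, x0⟩ := c
  set W := Ωp.filter (fun w : Quad => (w.1.2 - w.2.2, w.2.1) = (k0, x0)) with hW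
  have hWm : ∀ w ∈ W, w ∈ Ω ∧ pop (w.1 - w.2) ∧ w.1.2 - w.2.2 = k0 ∧ w.2.1 = x0 := by
    intro w hw
    obtain ⟨h1, h2⟩ := Finset.mem_filter.1 hw
    obtain ⟨h3, h4⟩ := Finset.mem_filter.1 h1
    exact ⟨h3, h4, (Prod.ext_iff.1 h2).1, (Prod.ext_iff.1 h2).2⟩
  have hWne : W.Nonempty := by
    rw [Finset.nonempty_iff_ne_empty]
    intro he
    rw [he] at hc
    simp at hc
    linarith
  obtain ⟨w0, hw0⟩ := hWne
  obtain ⟨hw0Ω, -, hk0, -⟩ := hWm w0 hw0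
  have hk0r : (w0.1.2:ℝ) - w0.2.2 = k0 := by exact_mod_cast hk0
  refine ⟨W.image (fun w : Quad => w.1.1), ?_, x0, k0, ?_, ?_, ?_, ?_⟩
  · intro x hx
    obtain ⟨w, hw, rfl⟩ := Finset.mem_image.1 hx
    exact (Finset.mem_product.1 (hΩm w (hWm w hw).1).1).1
  · have h1 := card_le_fib W (fun w : Quad => w.1.1) (K ^ (q3 + 2)) ?_
    · exact chain_aux (t := 32) (n := 3) (e := q3 + 2) hK0 (by norm_num) (by linarith) (Nat.cast_nonneg _) hc h1
    · intro x
      apply hfib _ (x - x0, k0) x0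
      · intro w hw
        exact (hWm w (Finset.mem_filter.1 hw).1).1
      · intro w hw
        obtain ⟨hw, hx⟩ := Finset.mem_filter.1 hw
        obtain ⟨-, -, h1, h2⟩ := hWm w hw
        refine Prod.ext ?_ h1
        rw [← h2, ← hx]; rfl
      · intro w hw
        exact (hWm w (Finset.mem_filter.1 hw).1).2.2.2
  · rw [← hk0r]; exact (hdN w0 hw0Ω).2
  · have := (hΩm w0 hw0Ω).2.2.2.2.2
    rw [hk0r, div_le_iff₀ (by positivity)] at this
    linarith
  · intro a ha
    obtain ⟨w, hw, rfl⟩ := Finset.mem_image.1 ha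
    obtain ⟨hwΩ, hpw, h1, h2⟩ := hWm w hw
    set d := w.1 - w.2 with hd
    have hd1 : (d.1:ℝ) = (w.1.1:ℝ) - x0 := by rw [hd, Prod.fst_sub, h2]; push_cast; rfl
    have hd2 : (d.2:ℝ) = k0 := by rw [hd, Prod.snd_sub, h1]
    have hl2 := (hLlow w hwΩ).2
    have hl1 := (hLlow w hwΩ).1
    have hu1 := (hLup w hwΩ).1
    have hu2 := (hLup w hwΩ).2
    rw [← hd] at hl1 hl2 hu1 hu2
    have hq3p : 0 < K ^ q3 := by positivity
    have hl2p : 0 < |L2 d| := lt_of_lt_of_le (by positivity) hl2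
    have hl1p : 0 < |L1 d| := lt_of_lt_of_le (by positivity) hl1
    have hl2n : L2 d ≠ 0 := abs_pos.1 hl2p
    rw [div_le_iff₀ hq3p] at hl1 hl2
    set P := Ω.filter (fun w : Quad => w.1 - w.2 = d) with hP
    have hPm : ∀ w ∈ P, w ∈ Ω ∧ w.1 - w.2 = d := fun w hw => Finset.mem_filter.1 hw
    have hPc : M ≤ 16 * K ^ 5 * (P.card : ℝ) := hpw
    have gc : Good A K ((q3 + 8) + (q3 + 2) + (q3 + 1) + 7) (L1 d / L2 d) := by
      refine good_of_pairs hA hK hAA (S := P.image (fun w : Quad => w.2.1)) (R := K ^ (q3 + 1))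
        (t := -((d.1:ℝ) * L1 d + (d.2:ℝ) * L2 d) / (2 * L2 d)) (a := q3 + 8) (b := q3 + 2) (r := q3 + 1)
        ?_ ?_ ?_ ?_ ?_ ?_
      · intro x hx
        obtain ⟨w, hw, rfl⟩ := Finset.mem_image.1 hx
        exact (Finset.mem_product.1 (hΩm w (hPm w hw).1).2.1).1
      · have h1 := card_le_fib P (fun w : Quad => w.2.1) (K ^ (q3 + 2)) ?_
        · exact chain_aux (t := 16) (n := 5) (e := q3 + 2) hK0 (by norm_num) (by linarith) (Nat.cast_nonneg _) hPc h1
        · intro x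
          apply hfib _ d x
          · intro w hw
            exact (hPm w (Finset.mem_filter.1 hw).1).1
          · intro w hw
            exact (hPm w (Finset.mem_filter.1 hw).1).2
          · intro w hw
            exact (Finset.mem_filter.1 hw).2
      · rw [abs_div, ← mul_div_assoc, le_div_iff₀ hl2p, one_mul, pow_add]
        nlinarith [sq_nonneg K]
      · positivity
      · exact le_rfl
      · intro x hx
        obtain ⟨v, hv, rfl⟩ := Finset.mem_image.1 hx
        obtain ⟨hvΩ, hvd⟩ := hPm v hv
        refine ⟨v.2.2, (Finset.mem_product.1 (hΩm v hvΩ).2.1).2, ?_⟩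
        have hs := hsum v hvΩ
        rw [hvd] at hs
        have f1 : (v.1.1:ℝ) = d.1 + v.2.1 := by rw [← hvd]; simp
        have f2 : (v.1.2:ℝ) = d.2 + v.2.2 := by rw [← hvd]; simp
        rw [f1, f2] at hs
        have e : L1 d / L2 d * (v.2.1:ℝ) + (v.2.2:ℝ) -
            -((d.1:ℝ) * L1 d + (d.2:ℝ) * L2 d) / (2 * L2 d) =
            (((d.1:ℝ) + v.2.1 + v.2.1) * L1 d + ((d.2:ℝ) + v.2.2 + v.2.2) * L2 d) / (2 * L2 d) := by
          field_simp; ring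
        rw [e, abs_div, abs_mul, abs_two, div_le_iff₀ (by positivity), pow_succ]
        nlinarith
    have gr := good_ratio (h := d.1) (k := d.2) (l1 := L1 d) (l2 := L2 d) (b1 := q2 + 2) (b2 := q3)
      (j := 3 * q3 + 18) hA hK hAA α β γ hdisc hα hβ hγ rfl rfl ?_ hl2p ?_ ?_
      (gc.mono hK1 (by omega))
    · rw [hd1, hd2] at gr
      exact gr
    · rw [hd2, ← hk0r]
      intro h0
      have := (hΩm w0 hw0Ω).2.2.2.2.2
      rw [h0, abs_zero] at this
      have : 0 < N / K ^ q2 := by positivity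
      linarith
    · rw [hd2, ← hk0r]
      have := (hΩm w0 hw0Ω).2.2.2.2.2
      rw [div_le_iff₀ (by positivity)] at this
      calc |L2 d| ≤ K ^ 2 * N := hu2
        _ ≤ K ^ 2 * (|(w0.1.2:ℝ) - w0.2.2| * K ^ q2) := by gcongr
        _ = _ := by ring
    · rw [hd1, ← h2]
      linarith [(hdN w hwΩ).1]

end DSP
end

section
open scoped Pointwise

namespace DSP
variable {A : Finset ℤ} {K N s : ℝ}

lemma combine (hs0 : 0 < s) (hs1 : s < 1) (α β γ : ℤ) (hdisc : β ^ 2 - 4 * α * γ ≠ 0) :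
    ∃ J : ℕ, ∀ (A : Finset ℤ) (K N : ℝ) (κ : Type) (f : ℤ × ℤ → κ), A.Nonempty → 100 ≤ K →
      |(α:ℝ)| ≤ K → |(β:ℝ)| ≤ K → |(γ:ℝ)| ≤ K → 1 ≤ N →
      ((A + A).card : ℝ) ≤ K * A.card → NC A N s K → (A.card : ℝ) ≤ K * N ^ s →
      (∀ a ∈ A, 0 ≤ (a:ℝ) ∧ (a:ℝ) ≤ N) → (((A ×ˢ A).image f).card : ℝ) ≤ K * A.card →
      (∀ p ∈ A ×ˢ A, ∀ p' ∈ A ×ˢ A, f p = f p' → |qf α β γ p - qf α β γ p'| ≤ K * N) →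
      N ≤ K ^ J := by
  obtain ⟨q, hq⟩ := nc_small (s := s) hs0 1
  obtain ⟨q2, hq2⟩ := nc_small (s := s) hs0 (q + 4)
  obtain ⟨q3, hq3⟩ : ∃ q3, q3 = q + q2 + 2 := ⟨_, rfl⟩
  obtain ⟨E, hE⟩ : ∃ E, E = (2 * ((7 * β.natAbs + 4) + (2 * (7 * (2 * γ).natAbs + 4) + (3 * q3 + 18) + 2 + 6) + 10) +
      (((2 * (7 * β.natAbs + 4) + (3 * q3 + 18) + 1 + 6) + (7 * (2 * α).natAbs + 4) + 10)
      + (q2 + 2) + 1) + (q3 + 3) + 6) := ⟨_, rfl⟩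
  obtain ⟨J, hJ⟩ : ∃ J, J = E + q2 + (q3 + 6) := ⟨_, rfl⟩
  obtain ⟨g, hg⟩ : ∃ g : ℝ, g = (1 - s) / 10 := ⟨_, rfl⟩
  have hg0 : 0 < g := by rw [hg]; linarith
  have hgs : 0 < g * s := by positivity
  refine ⟨(q + q2 + 3) + ⌈((12 * J + 62 : ℕ) : ℝ) / (g * s)⌉₊, ?_⟩
  intro A K N κ f hA hK hα hβ hγ hN hAA hNC hM hA0 hf hff
  have hK0 : 0 < K := by linarith
  have hK1 : 1 ≤ K := by linarith
  have hN0 : 0 < N := by linarith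
  rcases le_or_gt N (K ^ (q + q2 + 3)) with h | hbig
  · exact h.trans (pow_le_pow_right₀ hK1 (by omega))
  have b1 : K ^ q ≤ N := (pow_le_pow_right₀ hK1 (by omega)).trans hbig.le
  have b2 : K ^ q2 ≤ N := (pow_le_pow_right₀ hK1 (by omega)).trans hbig.le
  have t1 : 0 ≤ N / K ^ q := by positivity
  have t2 : 0 ≤ N / K ^ q2 := by positivity
  obtain ⟨Ω, hΩ, hΩm⟩ := quads_exist α β γ hdisc f hA hK hN0 hA0 hf hff (q := q) (q2 := q2)
    (fun S hS h => by
      have := hq A K N hK b1 hNC S hS (fun x hx y hy => (h x hx y hy).trans (by linarith))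
      rwa [pow_one] at this)
    (fun S hS h => hq2 A K N hK b2 hNC S hS (fun x hx y hy => (h x hx y hy).trans (by linarith)))
  obtain ⟨A', hA', x0, k0, h1, h2, h3, h4⟩ := quads_use hA hK hN0 hAA hA0 α β γ hdisc hα hβ hγ hq3
    hbig.le Ω hΩ hΩm
  rw [← hE] at h4
  have key := stage_two (J := J) hN hs0 hs1 hA hK hAA hNC hM hA0 hA'
    (h1.trans (mul_le_mul_of_nonneg_right (pow_le_pow_right₀ hK1 (by omega)) (Nat.cast_nonneg _)))
    h2 (h3.trans (mul_le_mul_of_nonneg_right (pow_le_pow_right₀ hK1 (by omega)) (abs_nonneg _)))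
    (fun a ha => (h4 a ha).mono hK1 (by omega)) hg
  have e1 : N = (N ^ (g * s)) ^ (1 / (g * s)) := by
    rw [← Real.rpow_mul hN0.le, mul_one_div_cancel hgs.ne', Real.rpow_one]
  rw [e1]
  calc (N ^ (g * s)) ^ (1 / (g * s)) ≤ (K ^ (12 * J + 62)) ^ (1 / (g * s)) :=
        Real.rpow_le_rpow (by positivity) key (by positivity)
    _ = K ^ (((12 * J + 62 : ℕ) : ℝ) / (g * s)) := by
        rw [← Real.rpow_natCast, ← Real.rpow_mul hK0.le, mul_one_div]
    _ ≤ K ^ ((((q + q2 + 3) + ⌈((12 * J + 62 : ℕ) : ℝ) / (g * s)⌉₊ : ℕ)) : ℝ) := by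
        apply Real.rpow_le_rpow_of_exponent_le hK1
        refine (Nat.le_ceil (((12 * J + 62 : ℕ) : ℝ) / (g * s))).trans ?_
        exact Nat.cast_le.2 (Nat.le_add_left _ _)
    _ = _ := Real.rpow_natCast _ _

end DSP
end

section
open scoped Pointwise

namespace DSP
variable {K N s : ℝ}

lemma cover_spec {δ : ℝ} (hδ : 0 ≤ δ) {X : Set ℝ} (hX : X.Finite) :
    ∃ c : ℝ → Set ℝ, ∃ F : Finset (Set ℝ), F.card = coverNum δ X ∧ (∀ x ∈ X, c x ∈ F) ∧
      ∀ x ∈ X, ∀ y ∈ X, c x = c y → |x - y| ≤ δ := by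
  have hne : {m : ℕ | ∃ F : Finset (Set ℝ), F.card = m ∧
    (∀ U ∈ F, EMetric.diam U ≤ ENNReal.ofReal δ) ∧ X ⊆ ⋃ U ∈ F, U}.Nonempty := by
    refine ⟨_, hX.toFinset.image (fun x => ({x} : Set ℝ)), rfl, ?_, ?_⟩
    · intro U hU
      obtain ⟨x, hx, rfl⟩ := Finset.mem_image.1 hU
      exact (le_of_eq Metric.ediam_singleton).trans bot_le
    · intro x hx
      simp only [Set.mem_iUnion]
      exact ⟨{x}, Finset.mem_image.2 ⟨x, by simpa using hx, rfl⟩, rfl⟩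
  obtain ⟨F, hF, hd, hc⟩ := Nat.sInf_mem hne
  have hex : ∀ x : ℝ, ∃ U : Set ℝ, x ∈ X → U ∈ F ∧ x ∈ U := by
    intro x
    by_cases hx : x ∈ X
    · have := hc hx
      simp only [Set.mem_iUnion] at this
      obtain ⟨U, hU, hxU⟩ := this
      exact ⟨U, fun _ => ⟨hU, hxU⟩⟩
    · exact ⟨∅, fun h => absurd h hx⟩
  choose c hcc using hex
  refine ⟨c, F, hF, fun x hx => (hcc x hx).1, ?_⟩
  intro x hx y hy hxy
  have h1 := (hcc x hx).2
  have h2 := (hcc y hy).2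
  rw [← hxy] at h2
  have h3 : edist x y ≤ ENNReal.ofReal δ := (EMetric.edist_le_diam_of_mem h1 h2).trans (hd _ (hcc x hx).1)
  rw [edist_dist, ENNReal.ofReal_le_ofReal_iff hδ, Real.dist_eq] at h3
  exact h3

/-- integer model of a separated set -/
noncomputable def fl (δ : ℝ) (B : Finset ℝ) : Finset ℤ := B.image (fun x => ⌊x / δ⌋)

lemma fl_card {δ : ℝ} (hδ : 0 < δ) {B : Finset ℝ}
    (hsep : ∀ x ∈ B, ∀ y ∈ B, x ≠ y → δ ≤ |x - y|) : (fl δ B).card = B.card := by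
  apply Finset.card_image_of_injOn
  intro x hx y hy hxy
  by_contra hne
  have h1 := hsep x hx y hy hne
  have h2 : |x / δ - y / δ| < 1 := Int.abs_sub_lt_one_of_floor_eq_floor hxy
  rw [← sub_div, abs_div, abs_of_pos hδ, div_lt_one hδ] at h2
  linarith

lemma fl_rep {δ : ℝ} (hδ : 0 < δ) {B : Finset ℝ} :
    ∃ r : ℤ → ℝ, ∀ n ∈ fl δ B, r n ∈ B ∧ (n:ℝ) ≤ r n / δ ∧ r n / δ ≤ n + 1 := by
  have hex : ∀ n : ℤ, ∃ x : ℝ, n ∈ fl δ B → x ∈ B ∧ (n:ℝ) ≤ x / δ ∧ x / δ ≤ n + 1 := by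
    intro n
    by_cases hn : n ∈ fl δ B
    · obtain ⟨x, hx, rfl⟩ := Finset.mem_image.1 hn
      exact ⟨x, fun _ => ⟨hx, Int.floor_le _, (Int.lt_floor_add_one _).le⟩⟩
    · exact ⟨0, fun h => absurd h hn⟩
  choose r hr using hex
  exact ⟨r, hr⟩

lemma sum_cover {δ : ℝ} (hδ : 0 < δ) (B : Finset ℝ) :
    ((fl δ B + fl δ B).card : ℝ) ≤
      7 * (coverNum δ (Set.image2 (fun x y => x + y) (↑B : Set ℝ) (↑B : Set ℝ)) : ℝ) := by
  obtain ⟨r, hr⟩ := fl_rep hδ (B := B)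
  obtain ⟨c, F, hF, hcF, hc⟩ := cover_spec hδ.le
    (X := Set.image2 (fun x y => x + y) (↑B : Set ℝ) (↑B : Set ℝ))
    (Set.Finite.image2 _ B.finite_toSet B.finite_toSet)
  have hm : ∀ p ∈ fl δ B ×ˢ fl δ B, r p.1 + r p.2 ∈
      Set.image2 (fun x y => x + y) (↑B : Set ℝ) (↑B : Set ℝ) := by
    intro p hp
    have hp := Finset.mem_product.1 hp
    exact Set.mem_image2_of_mem (f := fun x y : ℝ => x + y) (hr _ hp.1).1 (hr _ hp.2).1
  have h1 := image_card_le (fl δ B ×ˢ fl δ B) (fun p : ℤ × ℤ => c (r p.1 + r p.2))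
    (fun p : ℤ × ℤ => p.1 + p.2) 3 (by norm_num) (by
      intro p hp p' hp' he
      have h := hc _ (hm p hp) _ (hm p' hp') he
      have hp := Finset.mem_product.1 hp
      have hp' := Finset.mem_product.1 hp'
      have h5 : |r p.1 / δ + r p.2 / δ - (r p'.1 / δ + r p'.2 / δ)| ≤ 1 := by
        have : r p.1 / δ + r p.2 / δ - (r p'.1 / δ + r p'.2 / δ) =
          (r p.1 + r p.2 - (r p'.1 + r p'.2)) / δ := by ring
        rw [this, abs_div, abs_of_pos hδ, div_le_one hδ]
        exact h
      obtain ⟨-, a1, a2⟩ := hr _ hp.1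
      obtain ⟨-, a3, a4⟩ := hr _ hp.2
      obtain ⟨-, a5, a6⟩ := hr _ hp'.1
      obtain ⟨-, a7, a8⟩ := hr _ hp'.2
      rw [abs_le] at h5 ⊢
      push_cast
      constructor <;> linarith [h5.1, h5.2])
  have e : (fl δ B ×ˢ fl δ B).image (fun p : ℤ × ℤ => p.1 + p.2) = fl δ B + fl δ B := rfl
  rw [e] at h1
  have h2 : ((fl δ B ×ˢ fl δ B).image (fun p : ℤ × ℤ => c (r p.1 + r p.2))).card ≤ F.card := by
    apply Finset.card_le_card
    intro U hU
    obtain ⟨p, hp, rfl⟩ := Finset.mem_image.1 hU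
    exact hcF _ (hm p hp)
  rw [hF] at h2
  have h3 : (((fl δ B ×ˢ fl δ B).image (fun p : ℤ × ℤ => c (r p.1 + r p.2))).card : ℝ) ≤
    (coverNum δ (Set.image2 (fun x y => x + y) (↑B : Set ℝ) (↑B : Set ℝ)) : ℝ) := Nat.cast_le.2 h2
  linarith

lemma nc_transfer {δ : ℝ} (hδ : 0 < δ) (hs0 : 0 < s) (hs1 : s < 1) {B : Finset ℝ}
    (hK : 0 < K) (hsep : ∀ x ∈ B, ∀ y ∈ B, x ≠ y → δ ≤ |x - y|)
    (hnc : ∀ x l : ℝ, δ ≤ l → ((B.filter (fun t => t ∈ Set.Icc x (x + l))).card : ℝ) ≤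
      K / 2 * l ^ s * (B.card : ℝ)) : NC (fl δ B) δ⁻¹ s K := by
  intro S hS l hl h
  rw [fl_card hδ hsep]
  rcases S.eq_empty_or_nonempty with rfl | hne
  · simp only [Finset.card_empty, Nat.cast_zero]; positivity
  set m := S.min' hne with hm
  have hmS : m ∈ S := S.min'_mem hne
  have hsub : S ⊆ (B.filter (fun t => t ∈ Set.Icc ((m:ℝ) * δ) ((m:ℝ) * δ + 2 * l * δ))).image
      (fun x => ⌊x / δ⌋) := by
    intro n hn
    obtain ⟨x, hx, rfl⟩ := Finset.mem_image.1 (hS hn)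
    refine Finset.mem_image.2 ⟨x, Finset.mem_filter.2 ⟨hx, ?_⟩, rfl⟩
    have h1 : (m:ℝ) ≤ (⌊x / δ⌋ : ℤ) := by exact_mod_cast S.min'_le _ hn
    have h2 := (abs_le.1 (h _ hn _ hmS)).2
    have h3 := Int.floor_le (x / δ)
    have h4 := (Int.lt_floor_add_one (x / δ)).le
    have e : x = x / δ * δ := by field_simp
    constructor
    · rw [e]; exact mul_le_mul_of_nonneg_right (by linarith) hδ.le
    · rw [e, ← add_mul]; exact mul_le_mul_of_nonneg_right (by linarith) hδ.le
  have h1 : (S.card : ℝ) ≤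
      ((B.filter (fun t => t ∈ Set.Icc ((m:ℝ) * δ) ((m:ℝ) * δ + 2 * l * δ))).card : ℝ) :=
    Nat.cast_le.2 ((Finset.card_le_card hsub).trans Finset.card_image_le)
  refine (h1.trans (hnc _ (2 * l * δ) (by nlinarith))).trans ?_
  apply mul_le_mul_of_nonneg_right _ (Nat.cast_nonneg _)
  have e : (2 * l * δ) ^ s = 2 ^ s * (l / δ⁻¹) ^ s := by
    rw [div_inv_eq_mul, mul_assoc, Real.mul_rpow (by norm_num) (by positivity)]
  have h2 : (2:ℝ) ^ s ≤ 2 := by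
    calc (2:ℝ) ^ s ≤ 2 ^ (1:ℝ) := Real.rpow_le_rpow_of_exponent_le (by norm_num) hs1.le
      _ = 2 := Real.rpow_one _
  have h3 : 0 ≤ (l / δ⁻¹) ^ s := by positivity
  rw [e]
  have h4 : 2 ^ s * (l / δ⁻¹) ^ s ≤ 2 * (l / δ⁻¹) ^ s := mul_le_mul_of_nonneg_right h2 h3
  nlinarith

lemma sq_close {u v u' v' N : ℝ} (hu : 0 ≤ u) (huN : u ≤ N) (hv : 0 ≤ v)  (hvN : v ≤ N)
    (hu' : 0 ≤ u') (huN' : u' ≤ N) (hv' : 0 ≤ v')  (hvN' : v' ≤ N)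
    (h1 : |u - u'| ≤ 1) (h2 : |v - v'| ≤ 1) : |u * v - u' * v'| ≤ 2 * N := by
  have e : u * v - u' * v' = (u - u') * v + u' * (v - v') := by ring
  rw [e]
  refine (abs_add_le _ _).trans ?_
  rw [abs_mul, abs_mul, abs_of_nonneg hv, abs_of_nonneg hu']
  nlinarith [abs_nonneg (u - u'), abs_nonneg (v - v')]

lemma qf_close {α β γ : ℤ} {N u v : ℝ} {p : ℤ × ℤ} (h1 : 0 ≤ (p.1:ℝ)) (h1N : (p.1:ℝ) ≤ N)
    (h2 : 0 ≤ (p.2:ℝ)) (h2N : (p.2:ℝ) ≤ N) (hu : 0 ≤ u) (huN : u ≤ N) (hv : 0 ≤ v) (hvN : v ≤ N)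
    (d1 : |(p.1:ℝ) - u| ≤ 1) (d2 : |(p.2:ℝ) - v| ≤ 1) :
    |qf α β γ p - (α * u ^ 2 + β * (u * v) + γ * v ^ 2)| ≤
      2 * (|(α:ℝ)| + |(β:ℝ)| + |(γ:ℝ)|) * N := by
  have a1 := sq_close h1 h1N h1 h1N hu huN hu huN d1 d1
  have a2 := sq_close h1 h1N h2 h2N hu huN hv hvN d1 d2
  have a3 := sq_close h2 h2N h2 h2N hv hvN hv hvN d2 d2
  have e : qf α β γ p - (α * u ^ 2 + β * (u * v) + γ * v ^ 2) =
      α * ((p.1:ℝ) * p.1 - u * u) + β * ((p.1:ℝ) * p.2 - u * v) + γ * ((p.2:ℝ) * p.2 - v * v) := by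
    unfold qf; ring
  rw [e]
  refine (abs_add_three _ _ _).trans ?_
  rw [abs_mul, abs_mul, abs_mul]
  nlinarith [mul_le_mul_of_nonneg_left a1 (abs_nonneg (α:ℝ)),
    mul_le_mul_of_nonneg_left a2 (abs_nonneg (β:ℝ)), mul_le_mul_of_nonneg_left a3 (abs_nonneg (γ:ℝ))]

lemma transfer (hs0 : 0 < s) (hs1 : s < 1) (α β γ : ℤ) (D : ℕ) (hD : 0 < D)
    (hdisc : β ^ 2 - 4 * α * γ ≠ 0) (a₁ a₂ a₃ : ℝ) (h1 : (α:ℝ) = D * a₁) (h2 : (β:ℝ) = D * a₂)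
    (h3 : (γ:ℝ) = D * a₃) :
    ∃ J : ℕ, ∀ (δ K : ℝ) (B : Finset ℝ), 0 < δ → δ ≤ 1 → B.Nonempty →
      (∀ x ∈ B, 0 ≤ x ∧ x ≤ 1) →
      (∀ x ∈ B, ∀ y ∈ B, x ≠ y → δ ≤ |x - y|) →
      100 + 4 * (|(α:ℝ)| + |(β:ℝ)| + |(γ:ℝ)|) + D ≤ K →
      (∀ x l : ℝ, δ ≤ l → ((B.filter (fun t => t ∈ Set.Icc x (x + l))).card : ℝ) ≤
        K / 2 * l ^ s * (B.card : ℝ)) →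
      (B.card : ℝ) ≤ K * δ ^ (-s) →
      7 * (coverNum δ (Set.image2 (fun x y => x + y) (↑B : Set ℝ) (↑B : Set ℝ)) : ℝ) ≤
        K * B.card →
      (coverNum δ (Set.image2 (fun x y => a₁ * x ^ 2 + a₂ * (x * y) + a₃ * y ^ 2)
        (↑B : Set ℝ) (↑B : Set ℝ)) : ℝ) ≤ K * B.card →
      δ⁻¹ ≤ K ^ J := by
  obtain ⟨J, hJ⟩ := combine hs0 hs1 α β γ hdisc
  refine ⟨J, ?_⟩
  intro δ K B hδ hδ1 hB hB01 hsep hKb hnc hM hsum hphi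
  have hα := abs_nonneg (α:ℝ)
  have hβ := abs_nonneg (β:ℝ)
  have hγ := abs_nonneg (γ:ℝ)
  have hD0 : (0:ℝ) ≤ D := Nat.cast_nonneg _
  have hK0 : 0 < K := by linarith
  have hN1 : 1 ≤ δ⁻¹ := (one_le_inv₀ hδ).2 hδ1
  have hN0 : 0 < δ⁻¹ := by positivity
  obtain ⟨r, hr⟩ := fl_rep hδ (B := B)
  have hA0 : ∀ a ∈ fl δ B, 0 ≤ (a:ℝ) ∧ (a:ℝ) ≤ δ⁻¹ := by
    intro a ha
    obtain ⟨x, hx, rfl⟩ := Finset.mem_image.1 ha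
    obtain ⟨hx0, hx1⟩ := hB01 x hx
    constructor
    · exact_mod_cast Int.floor_nonneg.2 (div_nonneg hx0 hδ.le)
    · refine (Int.floor_le _).trans ?_
      rw [div_eq_mul_inv]
      nlinarith
  obtain ⟨c, F, hF, hcF, hc⟩ := cover_spec hδ.le
    (X := Set.image2 (fun x y => a₁ * x ^ 2 + a₂ * (x * y) + a₃ * y ^ 2) (↑B : Set ℝ) (↑B : Set ℝ))
    (Set.Finite.image2 _ B.finite_toSet B.finite_toSet)
  let φ : ℤ × ℤ → ℝ := fun p => a₁ * (r p.1) ^ 2 + a₂ * (r p.1 * r p.2) + a₃ * (r p.2) ^ 2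
  have hm : ∀ p ∈ fl δ B ×ˢ fl δ B, φ p ∈
      Set.image2 (fun x y => a₁ * x ^ 2 + a₂ * (x * y) + a₃ * y ^ 2) (↑B : Set ℝ) (↑B : Set ℝ) := by
    intro p hp
    have hp := Finset.mem_product.1 hp
    exact Set.mem_image2_of_mem (f := fun x y : ℝ => a₁ * x ^ 2 + a₂ * (x * y) + a₃ * y ^ 2)
      (hr _ hp.1).1 (hr _ hp.2).1
  have hclose : ∀ p ∈ fl δ B ×ˢ fl δ B, |qf α β γ p - D * (δ⁻¹) ^ 2 * φ p| ≤
      2 * (|(α:ℝ)| + |(β:ℝ)| + |(γ:ℝ)|) * δ⁻¹ := by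
    intro p hp
    have hp := Finset.mem_product.1 hp
    obtain ⟨m1, l1, u1⟩ := hr _ hp.1
    obtain ⟨m2, l2, u2⟩ := hr _ hp.2
    have b1 := hB01 _ m1
    have b2 := hB01 _ m2
    have A1 := hA0 _ hp.1
    have A2 := hA0 _ hp.2
    have e : D * (δ⁻¹) ^ 2 * φ p = α * (r p.1 / δ) ^ 2 + β * (r p.1 / δ * (r p.2 / δ)) +
        γ * (r p.2 / δ) ^ 2 := by
      rw [h1, h2, h3]
      simp only [φ]
      rw [div_eq_mul_inv, div_eq_mul_inv]
      ring
    rw [e]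
    have t1 : r p.1 / δ ≤ δ⁻¹ := by rw [div_eq_mul_inv]; nlinarith [b1.2]
    have t2 : r p.2 / δ ≤ δ⁻¹ := by rw [div_eq_mul_inv]; nlinarith [b2.2]
    exact qf_close A1.1 A1.2 A2.1 A2.2 (div_nonneg b1.1 hδ.le) t1 (div_nonneg b2.1 hδ.le) t2
      (by rw [abs_le]; constructor <;> linarith) (by rw [abs_le]; constructor <;> linarith)
  have hcard := fl_card hδ hsep
  apply hJ (fl δ B) K δ⁻¹ (Set ℝ) (fun p => c (φ p)) (hB.image _) (by linarith) (by linarith)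
    (by linarith) (by linarith) hN1
  · rw [hcard]; exact (sum_cover hδ B).trans hsum
  · exact nc_transfer hδ hs0 hs1 hK0 hsep hnc
  · rw [hcard, Real.inv_rpow hδ.le, ← Real.rpow_neg hδ.le]; exact hM
  · exact hA0
  · rw [hcard]
    have hle : ((fl δ B ×ˢ fl δ B).image (fun p => c (φ p))).card ≤ F.card := by
      apply Finset.card_le_card
      intro U hU
      obtain ⟨p, hp, rfl⟩ := Finset.mem_image.1 hU
      exact hcF _ (hm p hp)
    rw [hF] at hle
    exact (Nat.cast_le.2 hle).trans hphi
  · intro p hp p' hp' he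
    have g1 := abs_le.1 (hclose p hp)
    have g2 := abs_le.1 (hclose p' hp')
    have g3 : |D * (δ⁻¹) ^ 2 * φ p - D * (δ⁻¹) ^ 2 * φ p'| ≤ D * δ⁻¹ := by
      rw [← mul_sub, abs_mul, abs_of_nonneg (by positivity)]
      calc (D:ℝ) * (δ⁻¹) ^ 2 * |φ p - φ p'| ≤ D * (δ⁻¹) ^ 2 * δ :=
            mul_le_mul_of_nonneg_left (hc _ (hm p hp) _ (hm p' hp') he) (by positivity)
        _ = D * δ⁻¹ := by field_simp
    have g3 := abs_le.1 g3
    have g4 := mul_le_mul_of_nonneg_right hKb hN0.le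
    rw [abs_le]
    rw [add_mul, add_mul] at g4
    constructor <;> linarith [g1.1, g1.2, g2.1, g2.2, g3.1, g3.2]

end DSP
end

namespace DSP

lemma clear_den (a₁ a₂ a₃ : ℚ) (h : a₂ ^ 2 - 4 * a₁ * a₃ ≠ 0) :
    ∃ (D : ℕ) (α β γ : ℤ), 0 < D ∧ β ^ 2 - 4 * α * γ ≠ 0 ∧ (α:ℝ) = D * (a₁:ℝ) ∧
      (β:ℝ) = D * (a₂:ℝ) ∧ (γ:ℝ) = D * (a₃:ℝ) := by
  have d1 : (a₁.den : ℚ) ≠ 0 := by exact_mod_cast a₁.den_nz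
  have d2 : (a₂.den : ℚ) ≠ 0 := by exact_mod_cast a₂.den_nz
  have d3 : (a₃.den : ℚ) ≠ 0 := by exact_mod_cast a₃.den_nz
  have e1 : a₁.den * a₁ = (a₁.num : ℚ) := Rat.den_mul_eq_num a₁
  have e2 : a₂.den * a₂ = (a₂.num : ℚ) := Rat.den_mul_eq_num a₂
  have e3 : a₃.den * a₃ = (a₃.num : ℚ) := Rat.den_mul_eq_num a₃
  have f1 : ((a₁.num * a₂.den * a₃.den : ℤ) : ℚ) = ((a₁.den * a₂.den * a₃.den : ℕ) : ℚ) * a₁ := by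
    push_cast; rw [← e1]; ring
  have f2 : ((a₂.num * a₁.den * a₃.den : ℤ) : ℚ) = ((a₁.den * a₂.den * a₃.den : ℕ) : ℚ) * a₂ := by
    push_cast; rw [← e2]; ring
  have f3 : ((a₃.num * a₁.den * a₂.den : ℤ) : ℚ) = ((a₁.den * a₂.den * a₃.den : ℕ) : ℚ) * a₃ := by
    push_cast; rw [← e3]; ring
  refine ⟨a₁.den * a₂.den * a₃.den, a₁.num * a₂.den * a₃.den, a₂.num * a₁.den * a₃.den,
    a₃.num * a₁.den * a₂.den, ?_, ?_, ?_, ?_, ?_⟩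
  · have := a₁.den_pos
    have := a₂.den_pos
    have := a₃.den_pos
    positivity
  · intro h0
    apply h
    have h1 : (((a₂.num * a₁.den * a₃.den : ℤ) : ℚ)) ^ 2 - 4 * ((a₁.num * a₂.den * a₃.den : ℤ) : ℚ) *
        ((a₃.num * a₁.den * a₂.den : ℤ) : ℚ) = 0 := by
      exact_mod_cast h0
    rw [f1, f2, f3] at h1
    have h2 : (((a₁.den * a₂.den * a₃.den : ℕ) : ℚ)) ^ 2 * (a₂ ^ 2 - 4 * a₁ * a₃) = 0 := by
      rw [← h1]; ring
    rcases mul_eq_zero.1 h2 with h3 | h3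
    · exfalso
      have : (((a₁.den * a₂.den * a₃.den : ℕ) : ℚ)) ≠ 0 := by
        push_cast; exact mul_ne_zero (mul_ne_zero d1 d2) d3
      exact this (pow_eq_zero_iff (two_ne_zero) |>.1 h3)
    · exact h3
  · exact_mod_cast congrArg (fun x : ℚ => (x : ℝ)) f1
  · exact_mod_cast congrArg (fun x : ℚ => (x : ℝ)) f2
  · exact_mod_cast congrArg (fun x : ℚ => (x : ℝ)) f3

end DSP

set_option maxHeartbeats 1000000

/-- Theorem: for a nondegenerate rational quadratic form `φ(x,y) = a₁x² + a₂xy + a₃y²`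
(`a₂² - 4a₁a₃ ≠ 0`) and `0 < s < 1`, there are `e = e(s) > 0`, `ε = ε(φ,s) > 0` and
`K = K(φ,s) > 0` such that for all `C ≥ 1` and all `δ > 0`: if `A ⊆ [0,1]` is δ-separated of
cardinality `⌈δ^{-s}⌉` with the non-concentration bound, then for every `B ⊆ A` with
`#B ≥ δ^ε #A` one has `E_δ(B+B) + E_δ(φ(B,B)) ≥ K C^{-e} δ^{-ε} #A`. -/
theorem covering_sum_product_subsets (s : ℝ) (hs0 : 0 < s) (hs1 : s < 1) :
    ∃ e : ℝ, 0 < e ∧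
      ∀ (a₁ a₂ a₃ : ℚ), a₂ ^ 2 - 4 * a₁ * a₃ ≠ 0 →
        ∃ ε K : ℝ, 0 < ε ∧ 0 < K ∧
          ∀ C : ℝ, 1 ≤ C →
            ∀ δ : ℝ, 0 < δ →
              ∀ A : Finset ℝ, (↑A : Set ℝ) ⊆ Set.Icc 0 1 →
                (∀ x ∈ A, ∀ y ∈ A, x ≠ y → δ ≤ |x - y|) →
                A.card = ⌈δ ^ (-s)⌉₊ →
                (∀ x l : ℝ, δ ≤ l →
                  ((A.filter (fun t => t ∈ Set.Icc x (x + l))).card : ℝ) ≤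
                    C * l ^ s * (A.card : ℝ)) →
                ∀ B : Finset ℝ, B ⊆ A →
                  δ ^ ε * (A.card : ℝ) ≤ (B.card : ℝ) →
                  K * C ^ (-e) * δ ^ (-ε) * (A.card : ℝ) ≤
                    (coverNum δ (Set.image2 (fun x y => x + y) (↑B : Set ℝ) (↑B : Set ℝ)) : ℝ) +
                      (coverNum δ (Set.image2
                        (fun x y =>
                          (a₁ : ℝ) * x ^ 2 + (a₂ : ℝ) * (x * y) + (a₃ : ℝ) * y ^ 2)
                        (↑B : Set ℝ) (↑B : Set ℝ)) : ℝ) := by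
  refine ⟨1, one_pos, ?_⟩
  intro a₁ a₂ a₃ hdisc
  obtain ⟨D, α, β, γ, hD, hd, h1, h2, h3⟩ := DSP.clear_den a₁ a₂ a₃ hdisc
  obtain ⟨J, hJ⟩ := DSP.transfer hs0 hs1 α β γ D hD hd a₁ a₂ a₃ h1 h2 h3
  obtain ⟨c, hc⟩ : ∃ c : ℝ, c = 100 + 4 * (|(α:ℝ)| + |(β:ℝ)| + |(γ:ℝ)|) + D := ⟨_, rfl⟩
  have hc100 : 100 ≤ c := by
    have : (0:ℝ) ≤ D := Nat.cast_nonneg _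
    rw [hc]; linarith [abs_nonneg (α:ℝ), abs_nonneg (β:ℝ), abs_nonneg (γ:ℝ)]
  have hc0 : 0 < c := by linarith
  obtain ⟨ε, hε⟩ : ∃ ε : ℝ, ε = 1 / (8 * (J + 1)) := ⟨_, rfl⟩
  have hJ0 : (0:ℝ) ≤ J := Nat.cast_nonneg _
  have hε0 : 0 < ε := by rw [hε]; positivity
  have hε2 : 4 * ε * J ≤ 1 / 2 := by
    rw [hε, mul_one_div, div_mul_eq_mul_div, div_le_iff₀ (by positivity)]; linarith
  have hε3 : 2 * ε ≤ 1 := by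
    rw [hε, mul_one_div, div_le_iff₀ (by positivity)]; linarith
  have hcJ : 1 ≤ c ^ (2 * J) := one_le_pow₀ (by linarith)
  refine ⟨ε, 1 / (7 * c ^ (2 * J)), hε0, by positivity, ?_⟩
  intro C hC δ hδ A hA01 hsep hcard hnc B hBA hBcard
  have hC0 : 0 < C := by linarith
  have hdpos : 0 < δ ^ (-s) := Real.rpow_pos_of_pos hδ _
  have hApos : 0 < A.card := by rw [hcard]; exact Nat.ceil_pos.2 hdpos
  have hAposR : (0:ℝ) < A.card := by exact_mod_cast hApos
  have hBposR : (0:ℝ) < B.card := lt_of_lt_of_le (mul_pos (Real.rpow_pos_of_pos hδ _) hAposR) hBcard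
  have hBne : B.Nonempty := Finset.card_pos.1 (by exact_mod_cast hBposR)
  have hBle : (B.card : ℝ) ≤ A.card := by exact_mod_cast Finset.card_le_card hBA
  have hδ1 : δ ≤ 1 := by
    by_contra hgt
    push Not at hgt
    have : 1 < δ ^ ε := Real.one_lt_rpow hgt hε0
    nlinarith
  obtain ⟨N, hN⟩ : ∃ N : ℝ, N = δ⁻¹ := ⟨_, rfl⟩
  have hN1 : 1 ≤ N := by rw [hN]; exact (one_le_inv₀ hδ).2 hδ1
  have hN0 : 0 < N := by linarith
  have hNe : ∀ t : ℝ, δ ^ (-t) = N ^ t := by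
    intro t; rw [hN, Real.inv_rpow hδ.le, Real.rpow_neg hδ.le]
  have hNe' : δ ^ ε = (N ^ ε)⁻¹ := by
    rw [hN, Real.inv_rpow hδ.le, inv_inv]
  have hNε : 0 < N ^ ε := Real.rpow_pos_of_pos hN0 _
  have hNε1 : 1 ≤ N ^ ε := Real.one_le_rpow hN1 hε0.le
  have hAB : (A.card : ℝ) ≤ N ^ ε * B.card := by
    rw [hNe', inv_mul_le_iff₀ hNε] at hBcard; exact hBcard
  have e2 : N ^ (2 * ε) = N ^ ε * N ^ ε := by rw [← Real.rpow_add hN0]; ring_nf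
  have e4 : N ^ (4 * ε) = N ^ ε * N ^ ε * (N ^ ε * N ^ ε) := by
    rw [← Real.rpow_add hN0, ← Real.rpow_add hN0]; ring_nf
  have hsepB : ∀ x ∈ B, ∀ y ∈ B, x ≠ y → δ ≤ |x - y| :=
    fun x hx y hy => hsep x (hBA hx) y (hBA hy)
  rw [Real.rpow_neg_one, hNe ε]
  obtain ⟨S1, hS1⟩ : ∃ S1 : ℝ, S1 = (coverNum δ (Set.image2 (fun x y => x + y) (↑B : Set ℝ)
    (↑B : Set ℝ)) : ℝ) := ⟨_, rfl⟩
  obtain ⟨S2, hS2⟩ : ∃ S2 : ℝ, S2 = (coverNum δ (Set.image2 (fun x y =>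
    (a₁ : ℝ) * x ^ 2 + (a₂ : ℝ) * (x * y) + (a₃ : ℝ) * y ^ 2) (↑B : Set ℝ)
    (↑B : Set ℝ)) : ℝ) := ⟨_, rfl⟩
  have hS1n : 0 ≤ S1 := by rw [hS1]; exact Nat.cast_nonneg _
  have hS2n : 0 ≤ S2 := by rw [hS2]; exact Nat.cast_nonneg _
  rw [← hS1, ← hS2]
  have htriv : (B.card : ℝ) ≤ 7 * S1 := by
    rw [hS1]
    refine le_trans ?_ (DSP.sum_cover hδ B)
    rw [← DSP.fl_card hδ hsepB]
    exact Nat.cast_le.2 (Finset.card_le_card_add_right (hBne.image _))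
  have hcinv : 1 / (7 * c ^ (2 * J)) ≤ 1 / 7 := by
    apply one_div_le_one_div_of_le (by norm_num); linarith
  have hcinv0 : 0 < 1 / (7 * c ^ (2 * J)) := by positivity
  have hCinv : C⁻¹ ≤ 1 := inv_le_one_of_one_le₀ hC
  have hCinv0 : 0 < C⁻¹ := by positivity
  -- large C
  rcases le_or_gt (N ^ (2 * ε)) C with hCl | hCl
  · have t1 : C⁻¹ * (N ^ ε * (A.card : ℝ)) ≤ B.card := by
      rw [inv_mul_le_iff₀ hC0]
      calc N ^ ε * (A.card : ℝ) ≤ N ^ ε * (N ^ ε * B.card) := by gcongr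
        _ = N ^ (2 * ε) * B.card := by rw [e2]; ring
        _ ≤ C * B.card := by gcongr
    calc 1 / (7 * c ^ (2 * J)) * C⁻¹ * N ^ ε * (A.card : ℝ)
        = 1 / (7 * c ^ (2 * J)) * (C⁻¹ * (N ^ ε * (A.card : ℝ))) := by ring
      _ ≤ 1 / 7 * B.card := mul_le_mul hcinv t1 (by positivity) (by norm_num)
      _ ≤ S1 + S2 := by linarith
  -- general upper bound
  have t2 : C⁻¹ * (N ^ ε * (A.card : ℝ)) ≤ N ^ (2 * ε) * B.card := by
    calc C⁻¹ * (N ^ ε * (A.card : ℝ)) ≤ 1 * (N ^ ε * (N ^ ε * B.card)) := by gcongr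
      _ = N ^ (2 * ε) * B.card := by rw [e2]; ring
  -- small N
  rcases le_or_gt N (c ^ (2 * J)) with hNs | hNs
  · have t3 : N ^ (2 * ε) ≤ c ^ (2 * J) := by
      refine le_trans ?_ hNs
      calc N ^ (2 * ε) ≤ N ^ (1:ℝ) := Real.rpow_le_rpow_of_exponent_le hN1 hε3
        _ = N := Real.rpow_one _
    calc 1 / (7 * c ^ (2 * J)) * C⁻¹ * N ^ ε * (A.card : ℝ)
        = 1 / (7 * c ^ (2 * J)) * (C⁻¹ * (N ^ ε * (A.card : ℝ))) := by ring
      _ ≤ 1 / (7 * c ^ (2 * J)) * (c ^ (2 * J) * B.card) :=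
        mul_le_mul_of_nonneg_left (t2.trans (mul_le_mul_of_nonneg_right t3 hBposR.le)) hcinv0.le
      _ = 1 / 7 * B.card := by field_simp
      _ ≤ S1 + S2 := by linarith
  -- main case
  by_contra hcon
  push Not at hcon
  have hS : 7 * (S1 + S2) ≤ N ^ (2 * ε) * B.card := by
    have : 1 / (7 * c ^ (2 * J)) * C⁻¹ * N ^ ε * (A.card : ℝ) ≤
        1 / 7 * (N ^ (2 * ε) * B.card) := by
      rw [mul_assoc, mul_assoc]
      exact mul_le_mul hcinv t2 (by positivity) (by norm_num)
    linarith
  have hN2 : 1 ≤ N ^ (2 * ε) := Real.one_le_rpow hN1 (by positivity)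
  have hN4 : N ^ (2 * ε) ≤ N ^ (4 * ε) := Real.rpow_le_rpow_of_exponent_le hN1 (by linarith)
  have hN4' : 1 ≤ N ^ (4 * ε) := hN2.trans hN4
  have hKc : c ≤ c * N ^ (4 * ε) := le_mul_of_one_le_right hc0.le hN4'
  have hKN : N ^ (4 * ε) ≤ c * N ^ (4 * ε) := le_mul_of_one_le_left (by linarith) (by linarith)
  have hX : N ^ (2 * ε) * (B.card : ℝ) ≤ c * N ^ (4 * ε) * B.card :=
    mul_le_mul_of_nonneg_right (hN4.trans hKN) hBposR.le
  have hfin := hJ δ (c * N ^ (4 * ε)) B hδ hδ1 hBne (fun x hx => hA01 (hBA hx)) hsepB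
    (by rw [← hc]; exact hKc) ?_ ?_ ?_ ?_
  · rw [← hN, mul_pow, ← Real.rpow_natCast (N ^ (4 * ε)), ← Real.rpow_mul hN0.le] at hfin
    have u1 : N ^ (4 * ε * J) ≤ N ^ (1 / 2 : ℝ) := Real.rpow_le_rpow_of_exponent_le hN1 hε2
    have u2 : N = N ^ (1 / 2 : ℝ) * N ^ (1 / 2 : ℝ) := by
      rw [← Real.rpow_add hN0]; norm_num
    have u0 : 0 < N ^ (1 / 2 : ℝ) := Real.rpow_pos_of_pos hN0 _
    have u3 : N ^ (1 / 2 : ℝ) * N ^ (1 / 2 : ℝ) ≤ c ^ J * N ^ (1 / 2 : ℝ) := by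
      rw [← u2]
      exact hfin.trans (mul_le_mul_of_nonneg_left u1 (by positivity))
    have u4 := le_of_mul_le_mul_right u3 u0
    have u5 : N ≤ c ^ J * c ^ J := by
      rw [u2]; exact mul_le_mul u4 u4 u0.le (by positivity)
    rw [two_mul, pow_add] at hNs
    linarith
  · intro x l hl
    have hl0 : 0 ≤ l ^ s := Real.rpow_nonneg (by linarith) _
    have v1 : ((B.filter (fun t => t ∈ Set.Icc x (x + l))).card : ℝ) ≤
        ((A.filter (fun t => t ∈ Set.Icc x (x + l))).card : ℝ) :=
      Nat.cast_le.2 (Finset.card_le_card (Finset.filter_subset_filter _ hBA))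
    have v2 : C * N ^ ε ≤ c * N ^ (4 * ε) / 2 := by
      have v3 : C * N ^ ε ≤ N ^ (2 * ε) * N ^ (2 * ε) := by
        apply mul_le_mul hCl.le _ hNε.le (by linarith)
        rw [e2]; exact le_mul_of_one_le_left hNε.le hNε1
      have v4 : N ^ (2 * ε) * N ^ (2 * ε) = N ^ (4 * ε) := by rw [e2, e4]
      rw [v4] at v3
      have v5 : 2 * N ^ (4 * ε) ≤ c * N ^ (4 * ε) :=
        mul_le_mul_of_nonneg_right (by linarith) (by linarith)
      linarith
    calc ((B.filter (fun t => t ∈ Set.Icc x (x + l))).card : ℝ) ≤ C * l ^ s * A.card :=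
          v1.trans (hnc x l hl)
      _ ≤ C * l ^ s * (N ^ ε * B.card) := mul_le_mul_of_nonneg_left hAB (by positivity)
      _ = (C * N ^ ε) * (l ^ s * B.card) := by ring
      _ ≤ (c * N ^ (4 * ε) / 2) * (l ^ s * B.card) :=
          mul_le_mul_of_nonneg_right v2 (by positivity)
      _ = _ := by ring
  · rw [hNe s]
    rw [hNe s] at hcard
    have w1 : 1 ≤ N ^ s := Real.one_le_rpow hN1 hs0.le
    have w2 : (A.card : ℝ) < N ^ s + 1 := by rw [hcard]; exact Nat.ceil_lt_add_one (by linarith)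
    have w3 : 2 * N ^ s ≤ c * N ^ (4 * ε) * N ^ s :=
      mul_le_mul_of_nonneg_right (by linarith) (by linarith)
    linarith
  · rw [← hS1]
    exact le_trans (by linarith) (hS.trans hX)
  · rw [← hS2]
    exact le_trans (by linarith) (hS.trans hX)
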